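/- arXiv:1802.05026 — 2 statements merged into one kernel-verified Lean document; each statement's English description precedes it below -/
import Mathlib

section
/- For every natural number k there exists a natural number t_k such that for every digraph G, either G contains k pairwise edge-disjoint directed cycles, or there is a set X of at most t_k directed edges of G such that the digraph obtained from G by deleting the edges in X contains no directed cycle. -/
/-- `l` is the (cyclically ordered) vertex list of a directed cycle in the digraph `G`:
it has at least two pairwise distinct vertices, and every consecutive pair (including
the wrap-around from the last vertex to the first) is a directed edge of `G`. -/
def Digraph.IsDicycle {V : Type} (G : Digraph V) (l : List V) : Prop :=
  2 ≤ l.length ∧ l.Nodup ∧ ∀ e ∈ l.zip (l.rotate 1), G.Adj e.1 e.2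

/-- The list of directed edges of the directed cycle with vertex list `l`. -/
def cycleEdges {V : Type} (l : List V) : List (V × V) :=
  l.zip (l.rotate 1)

/-- The directed line graph `L(G)` of `G`: its vertices are the directed edges of `G`
(encoded as those pairs in `V × V` that are edges of `G`), and there is a directed edge
from `(a, b)` to `(c, d)` iff both are edges of `G` and `b = c`. -/
def lineDigraph {V : Type} (G : Digraph V) : Digraph (V × V) :=
  ⟨fun e f => G.Adj e.1 e.2 ∧ G.Adj f.1 f.2 ∧ e.2 = f.1⟩

namespace EPx

/-! ### Ramsey -/

lemma extend_mono (M N : ℕ) (f : ℕ → ℕ) (hf : ∀ i j, i < j → j < M → f i < f j)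
    (hN : ∀ i < M, f i < N) : ∃ g : ℕ → ℕ, StrictMono g ∧ (∀ i < M, g i < N) ∧ ∀ i < M, g i = f i := by
  refine ⟨fun i => if i < M then f i else N + i, ?_, ?_, ?_⟩
  · intro i j hij
    by_cases hj : j < M
    · have hi : i < M := by omega
      simp only [hj, hi, if_true]; exact hf i j hij hj
    · by_cases hi : i < M
      · simp only [hj, hi, if_true, if_false]; have := hN i hi; omega
      · simp only [hj, hi, if_false]; omega
  · intro i hi; simp only [hi, if_true]; exact hN i hi
  · intro i hi; simp only [hi, if_true]

lemma finset_enum (s : Finset ℕ) (M L : ℕ) (hM : M ≤ s.card) (hL : ∀ i ∈ s, i < L) :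
    ∃ g : ℕ → ℕ, StrictMono g ∧ (∀ i < M, g i < L) ∧ ∀ i < M, g i ∈ s := by
  let f : ℕ → ℕ := fun i => if h : i < s.card then s.orderEmbOfFin rfl ⟨i, h⟩ else 0
  have hfs : ∀ i < M, f i ∈ s := by
    intro i hi
    have h : i < s.card := by omega
    simp only [f, h, dif_pos]; exact Finset.orderEmbOfFin_mem _ _ _
  obtain ⟨g, h1, h2, h3⟩ := extend_mono M L f (by
    intro i j hij hj
    have h : i < s.card := by omega
    have h' : j < s.card := by omega
    simp only [f, h, h', dif_pos]
    exact (s.orderEmbOfFin rfl).strictMono hij) (fun i hi => hL _ (hfs i hi))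
  exact ⟨g, h1, h2, fun i hi => by rw [h3 i hi]; exact hfs i hi⟩

/-- bounded strictly monotone tuple -/
def Tup (m M : ℕ) (x : Fin m → ℕ) : Prop := StrictMono x ∧ ∀ i, x i < M

theorem ramsey (m : ℕ) (K : Type) [Finite K] (M : ℕ) : ∃ N, ∀ c : (Fin m → ℕ) → K,
    ∃ g : ℕ → ℕ, StrictMono g ∧ (∀ i < M, g i < N) ∧
      ∀ x y, Tup m M x → Tup m M y → c (g ∘ x) = c (g ∘ y) := by
  classical
  induction m generalizing M with
  | zero =>
    refine ⟨M, fun c => ⟨id, strictMono_id, fun i h => h, fun x y _ _ => ?_⟩⟩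
    congr 1; funext i; exact i.elim0
  | succ m ih =>
    have key : ∀ L, ∃ N, ∀ c : (Fin (m+1) → ℕ) → K,
        ∃ g : ℕ → ℕ, StrictMono g ∧ (∀ i < L, g i < N) ∧
        ∀ x y, Tup (m+1) L x → Tup (m+1) L y → x 0 = y 0 → c (g ∘ x) = c (g ∘ y) := by
      intro L
      induction L with
      | zero => exact ⟨0, fun c => ⟨id, strictMono_id, by simp, fun x y hx _ _ => absurd (hx.2 0) (by simp)⟩⟩
      | succ L ihL =>
        obtain ⟨NL, hNL⟩ := ihL
        obtain ⟨N, hN⟩ := ih NL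
        refine ⟨N + 1, fun c => ?_⟩
        obtain ⟨g1, m1, b1, h1⟩ := hN (fun x => c (Fin.cons 0 (fun i => x i + 1)))
        obtain ⟨g2, m2, b2, h2⟩ := hNL (fun x => c (fun i => g1 (x i) + 1))
        refine ⟨fun i => if i = 0 then 0 else g1 (g2 (i-1)) + 1, ?_, ?_, ?_⟩
        · intro i j hij
          by_cases hi : i = 0
          · simp [hi, show j ≠ 0 by omega]
          · simp only [hi, show j ≠ 0 by omega, if_false]
            have := m1 (m2 (show i - 1 < j - 1 by omega)); omega
        · intro i hi
          by_cases h0 : i = 0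
          · simp [h0]
          · simp only [h0, if_false]
            have := b1 _ (b2 (i-1) (by omega)); omega
        · intro x y hx hy hxy
          by_cases h0 : x 0 = 0
          · have aux : ∀ x, Tup (m+1) (L+1) x → x 0 = 0 →
                ((fun i => if i = 0 then 0 else g1 (g2 (i-1)) + 1) ∘ x) =
                  (Fin.cons 0 (fun i => (g1 ∘ (fun i : Fin m => g2 (x i.succ - 1))) i + 1) : Fin (m+1) → ℕ)
                ∧ Tup m NL (fun i : Fin m => g2 (x i.succ - 1)) := by
              intro x hx h0
              have hpos : ∀ i : Fin m, 0 < x i.succ := fun i => by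
                have := hx.1 (Fin.succ_pos i); omega
              constructor
              · funext i
                refine Fin.cases ?_ (fun i => ?_) i
                · simp [h0]
                · simp [(hpos i).ne']
              · constructor
                · intro i j hij
                  apply m2
                  have := hx.1 (Fin.succ_lt_succ_iff.2 hij)
                  have := hpos i; omega
                · intro i
                  apply b2
                  have := hx.2 i.succ; have := hpos i; omega
            obtain ⟨e1, t1⟩ := aux x hx h0
            obtain ⟨e2, t2⟩ := aux y hy (hxy ▸ h0)
            rw [e1, e2]
            exact h1 _ _ t1 t2
          · have aux : ∀ x, Tup (m+1) (L+1) x → x 0 ≠ 0 →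
                ((fun i => if i = 0 then 0 else g1 (g2 (i-1)) + 1) ∘ x) =
                  (fun i => g1 ((g2 ∘ (fun i => x i - 1)) i) + 1)
                ∧ Tup (m+1) L (fun i => x i - 1) := by
              intro x hx h0
              have hpos : ∀ i, 0 < x i := fun i => by
                have := hx.1.monotone (Fin.zero_le i); omega
              constructor
              · funext i; simp [(hpos i).ne']
              · constructor
                · intro i j hij
                  have := hx.1 hij
                  have := hpos i
                  show x i - 1 < x j - 1
                  omega
                · intro i; have := hx.2 i; have := hpos i
                  show x i - 1 < L
                  omega
            obtain ⟨e1, t1⟩ := aux x hx h0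
            obtain ⟨e2, t2⟩ := aux y hy (hxy ▸ h0)
            rw [e1, e2]
            exact h2 _ _ t1 t2 (by simp [hxy])
    haveI := Fintype.ofFinite K
    obtain ⟨N, hN⟩ := key (Fintype.card K * M)
    refine ⟨N, fun c => ?_⟩
    obtain ⟨g, hg, hb, hc⟩ := hN c
    -- color of minimal element
    let chi : ℕ → Option K := fun i =>
      if h : ∃ x, Tup (m+1) (Fintype.card K * M) x ∧ x 0 = i then some (c (g ∘ h.choose)) else none
    have hchi : ∀ x, Tup (m+1) (Fintype.card K * M) x → chi (x 0) = some (c (g ∘ x)) := by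
      intro x hx
      have h : ∃ x', Tup (m+1) (Fintype.card K * M) x' ∧ x' 0 = x 0 := ⟨x, hx, rfl⟩
      simp only [chi, h, dif_pos]
      congr 1
      exact hc _ _ h.choose_spec.1 hx h.choose_spec.2
    by_cases hK : Nonempty K
    swap
    · exact absurd ⟨c (fun _ => 0)⟩ hK
    obtain ⟨k0⟩ := hK
    obtain ⟨col, -, hcol⟩ := Finset.exists_le_card_fiber_of_mul_le_card_of_maps_to
      (s := Finset.range (Fintype.card K * M)) (t := (Finset.univ : Finset K))
      (f := fun i => (chi i).getD k0) (n := M) (fun _ _ => Finset.mem_univ _) ⟨k0, Finset.mem_univ _⟩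
      (by simp)
    obtain ⟨h, mh, bh, sh⟩ := finset_enum _ M (Fintype.card K * M) hcol (by
      intro i hi; simpa using (Finset.mem_filter.1 hi).1)
    refine ⟨g ∘ h, hg.comp mh, fun i hi => hb _ (bh i hi), ?_⟩
    have aux : ∀ x, Tup (m+1) M x → c ((g ∘ h) ∘ x) = col := by
      intro x hx
      have h1 := hchi (h ∘ x) ⟨mh.comp hx.1, fun i => bh _ (hx.2 i)⟩
      have h2 := (Finset.mem_filter.1 (sh (x 0) (hx.2 0))).2
      simp only [Function.comp_apply] at h1
      rw [h1] at h2
      exact h2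
    intro x y hx hy
    rw [aux x hx, aux y hy]

/-- Erdős–Szekeres -/
theorem erdSze (K : ℕ) : ∃ N, ∀ f : ℕ → ℕ, (∀ i j, i < N → j < N → f i = f j → i = j) →
    ∃ g : ℕ → ℕ, StrictMono g ∧ (∀ i < K, g i < N) ∧
    ((∀ i j, i < j → j < K → f (g i) < f (g j)) ∨ (∀ i j, i < j → j < K → f (g j) < f (g i))) := by
  obtain ⟨N, hN⟩ := ramsey 2 Prop K
  refine ⟨N, fun f hf => ?_⟩
  obtain ⟨g, mg, bg, hg⟩ := hN (fun x => f (x 0) < f (x 1))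
  refine ⟨g, mg, bg, ?_⟩
  have tup : ∀ i j, i < j → j < K → Tup 2 K ![i, j] := by
    intro i j hij hj
    refine ⟨?_, ?_⟩
    · intro a b hab
      fin_cases a <;> fin_cases b <;> simp_all
    · intro a; fin_cases a <;> simp <;> omega
  by_cases h : ∀ i j, i < j → j < K → f (g i) < f (g j)
  · exact Or.inl h
  · right
    push Not at h
    obtain ⟨i, j, hij, hj, hle⟩ := h
    intro i' j' hij' hj'
    have := hg _ _ (tup i j hij hj) (tup i' j' hij' hj')
    simp at this
    by_contra hcon
    have h2 : f (g i') < f (g j') := by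
      rcases lt_trichotomy (f (g i')) (f (g j')) with h | h | h
      · exact h
      · exact absurd (mg.injective (hf _ _ (bg _ (by omega)) (bg _ hj') h)) (by omega)
      · exact absurd h hcon
    have := this.2 h2
    omega

end EPx

namespace EPx

section

open Relation

/-! ### Reachability and paths -/

variable {W : Type}

def RS (r : W → W → Prop) (X : Set W) (u v : W) : Prop := r u v ∧ u ∈ X ∧ v ∈ X

def Reach (r : W → W → Prop) (X : Set W) (a b : W) : Prop := a ∈ X ∧ ReflTransGen (RS r X) a b

def Cyc (r : W → W → Prop) (X : Set W) : Prop := ∃ v, TransGen (RS r X) v v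

lemma RS.mono {r r' : W → W → Prop} {X Y : Set W} (hr : ∀ u v, r u v → r' u v) (h : X ⊆ Y)
    {u v : W} (hu : RS r X u v) : RS r' Y u v := ⟨hr _ _ hu.1, h hu.2.1, h hu.2.2⟩

lemma Reach.mono' {r r' : W → W → Prop} {X Y : Set W} (hr : ∀ u v, r u v → r' u v) (h : X ⊆ Y)
    {u v : W} (hu : Reach r X u v) : Reach r' Y u v :=
  ⟨h hu.1, ReflTransGen.mono (fun _ _ (q : RS r X _ _) => RS.mono hr h q) _ _ hu.2⟩

lemma Reach.mono {r : W → W → Prop} {X Y : Set W} (h : X ⊆ Y)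
    {u v : W} (hu : Reach r X u v) : Reach r Y u v := hu.mono' (fun _ _ q => q) h

lemma Cyc.mono {r : W → W → Prop} {X Y : Set W} (h : X ⊆ Y) (hu : Cyc r X) : Cyc r Y := by
  obtain ⟨v, hv⟩ := hu
  exact ⟨v, TransGen.mono (fun _ _ (q : RS r X _ _) => RS.mono (fun _ _ q => q) h q) _ _ hv⟩

lemma Reach.trans {r : W → W → Prop} {X : Set W} {a b c : W} (h : Reach r X a b)
    (h' : Reach r X b c) : Reach r X a c := ⟨h.1, h.2.trans h'.2⟩

lemma Reach.mem {r : W → W → Prop} {X : Set W} {a b : W} (h : Reach r X a b) : b ∈ X := by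
  obtain ⟨h1, h2⟩ := h
  rcases ReflTransGen.cases_tail h2 with h | ⟨c, _, h⟩
  · rw [h]; exact h1
  · exact h.2.2

lemma Reach.refl {r : W → W → Prop} {X : Set W} {a : W} (h : a ∈ X) : Reach r X a a :=
  ⟨h, ReflTransGen.refl⟩

lemma Reach.single {r : W → W → Prop} {X : Set W} {a b : W} (h : a ∈ X) (h' : b ∈ X)
    (hr : r a b) : Reach r X a b :=
  ⟨h, ReflTransGen.single ⟨hr, h, h'⟩⟩

/-- induction principle -/
lemma Reach.ind {r : W → W → Prop} {X : Set W} {a b : W} (h : Reach r X a b) (P : W → Prop)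
    (h0 : P a) (hs : ∀ u v, Reach r X a u → v ∈ X → r u v → P u → P v) : P b := by
  obtain ⟨h1, h2⟩ := h
  induction h2 with
  | refl => exact h0
  | tail h3 h4 ih => exact hs _ _ ⟨h1, h3⟩ h4.2.2 h4.1 ih

lemma Reach.ind_head {r : W → W → Prop} {X : Set W} {a b : W} (h : Reach r X a b) (P : W → Prop)
    (h0 : P b) (hs : ∀ u v, u ∈ X → r u v → Reach r X v b → P v → P u) : P a := by
  obtain ⟨h1, h2⟩ := h
  induction h2 using ReflTransGen.head_induction_on with
  | refl => exact h0
  | head h3 h4 ih => exact hs _ _ h3.2.1 h3.1 ⟨h3.2.2, h4⟩ (ih h3.2.2)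

def Top (r : W → W → Prop) (t : W → ℕ) : Prop := Function.Injective t ∧ ∀ u v, r u v → t u < t v

lemma Reach.time {r : W → W → Prop} {t : W → ℕ} (ht : Top r t) {X : Set W} {a b : W}
    (h : Reach r X a b) : t a ≤ t b :=
  h.ind (fun v => t a ≤ t v) le_rfl (fun u v _ _ h hu => hu.trans (ht.2 _ _ h).le)

lemma Reach.window {r : W → W → Prop} {t : W → ℕ} (ht : Top r t) {X : Set W} {a b : W}
    (h : Reach r X a b) : Reach r (X ∩ {w | t a ≤ t w ∧ t w ≤ t b}) a b := by
  have key : ∀ v, Reach r X a v → Reach r (X ∩ {w | t a ≤ t w ∧ t w ≤ t v}) a v := by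
    intro v hv
    refine hv.ind (fun v => Reach r (X ∩ {w | t a ≤ t w ∧ t w ≤ t v}) a v) ?_ ?_
    · exact Reach.refl ⟨h.1, le_rfl, le_rfl⟩
    · intro u v hu hv huv ih
      have h1 := ht.2 _ _ huv
      have h2 := hu.time ht
      refine (ih.mono ?_).trans (Reach.single ⟨hu.mem, ?_, ?_⟩ ⟨hv, ?_, ?_⟩ huv)
      · rintro w ⟨hw, h3, h4⟩; exact ⟨hw, h3, h4.trans h1.le⟩
      · exact h2
      · exact h1.le
      · exact h2.trans h1.le
      · exact le_rfl
  exact key b h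

structure IsPath (r : W → W → Prop) (t : W → ℕ) (S : Set W) (a b : W) : Prop where
  ha : a ∈ S
  hb : b ∈ S
  lin : ∀ x ∈ S, ∀ y ∈ S, t x ≤ t y → Reach r S x y
  lo : ∀ x ∈ S, t a ≤ t x
  hi : ∀ x ∈ S, t x ≤ t b

lemma IsPath.mono' {r r' : W → W → Prop} {t : W → ℕ} {S : Set W} {a b : W}
    (h : IsPath r t S a b) (hr : ∀ u v, r u v → r' u v) : IsPath r' t S a b :=
  ⟨h.ha, h.hb, fun x hx y hy hxy => (h.lin x hx y hy hxy).mono' hr subset_rfl, h.lo, h.hi⟩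

lemma IsPath.single (r : W → W → Prop) {t : W → ℕ} (hi : Function.Injective t) (a : W) :
    IsPath r t {a} a a := by
  refine ⟨rfl, rfl, ?_, ?_, ?_⟩
  · rintro x rfl y rfl _; exact Reach.refl rfl
  · rintro x rfl; exact le_rfl
  · rintro x rfl; exact le_rfl

lemma IsPath.reach {r : W → W → Prop} {t : W → ℕ} {S : Set W} {a b : W}
    (h : IsPath r t S a b) : Reach r S a b := h.lin _ h.ha _ h.hb (h.lo _ h.hb)

lemma IsPath.pre {r : W → W → Prop} {t : W → ℕ} {S : Set W} {a b v : W}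
    (h : IsPath r t S a b) (hv : v ∈ S) : Reach r S a v := h.lin _ h.ha _ hv (h.lo _ hv)

lemma IsPath.suf {r : W → W → Prop} {t : W → ℕ} {S : Set W} {a b v : W}
    (h : IsPath r t S a b) (hv : v ∈ S) : Reach r S v b := h.lin _ hv _ h.hb (h.hi _ hv)

lemma IsPath.glue {r : W → W → Prop} {t : W → ℕ} (ht : Top r t) {P Q : Set W} {a b c d : W}
    (h : IsPath r t P a c) (h' : IsPath r t Q d b) (hcd : c = d ∨ r c d) :
    IsPath r t (P ∪ Q) a b := by
  have hle : t c ≤ t d := by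
    rcases hcd with rfl | h1
    · exact le_rfl
    · exact (ht.2 _ _ h1).le
  have hR : Reach r (P ∪ Q) c d := by
    rcases hcd with rfl | h1
    · exact Reach.refl (Or.inl h.hb)
    · exact Reach.single (Or.inl h.hb) (Or.inr h'.ha) h1
  have hPQ : ∀ x ∈ P, ∀ y ∈ Q, Reach r (P ∪ Q) x y := fun x hx y hy =>
    (((h.suf hx).mono Set.subset_union_left).trans hR).trans
      ((h'.pre hy).mono Set.subset_union_right)
  refine ⟨Or.inl h.ha, Or.inr h'.hb, ?_, ?_, ?_⟩
  · rintro x (hx | hx) y (hy | hy) hxy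
    · exact (h.lin _ hx _ hy hxy).mono Set.subset_union_left
    · exact hPQ _ hx _ hy
    · have h1 := h.hi _ hy
      have h2 := h'.lo _ hx
      have : x = y := ht.1 (by omega)
      subst this
      exact Reach.refl (Or.inl hy)
    · exact (h'.lin _ hx _ hy hxy).mono Set.subset_union_right
  · rintro x (hx | hx)
    · exact h.lo _ hx
    · have h1 := h.lo _ h.hb
      have h2 := h'.lo _ hx
      omega
  · rintro x (hx | hx)
    · have h1 := h.hi _ hx
      have h2 := h'.lo _ h'.hb
      omega
    · exact h'.hi _ hx

/-! ### Menger -/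

lemma menger_sepA {r : W → W → Prop} {A B : Set W} {x y : W} {Z Y : Finset W}
    (hZ : ∀ a ∈ A, ∀ b ∈ B, ¬ Reach (fun u v => r u v ∧ ¬ (u = x ∧ v = y)) (↑Z)ᶜ a b)
    (hY : ∀ a ∈ A, ∀ b ∈ ((↑Z : Set W) ∪ {x}),
      ¬ Reach (fun u v => r u v ∧ ¬ (u = x ∧ v = y)) (↑Y)ᶜ a b) :
    ∀ a ∈ A, ∀ b ∈ B, ¬ Reach r (↑Y)ᶜ a b := by
  intro a ha b hb h
  have ha0 : a ∈ ((↑Y : Set W)ᶜ) := h.1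
  refine hZ a ha b hb ?_
  have key : Reach (fun u v => r u v ∧ ¬ (u = x ∧ v = y)) ((↑Y)ᶜ ∩ (↑Z)ᶜ) a b := by
    refine h.ind (fun v => Reach (fun u v => r u v ∧ ¬ (u = x ∧ v = y)) ((↑Y)ᶜ ∩ (↑Z)ᶜ) a v) ?_ ?_
    · refine Reach.refl ⟨ha0, fun hz => hY a ha a (Or.inl hz) (Reach.refl ha0)⟩
    · intro u v _ hv huv ih
      have hux : u ≠ x := fun hux => hY a ha u (Or.inr hux) (ih.mono Set.inter_subset_left)
      have h1 : Reach (fun u v => r u v ∧ ¬ (u = x ∧ v = y)) ((↑Y)ᶜ) a v :=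
        (ih.mono Set.inter_subset_left).trans (Reach.single ih.mem.1 hv ⟨huv, fun h => hux h.1⟩)
      have hvz : v ∈ (↑Z : Set W)ᶜ := fun hz => hY a ha v (Or.inl hz) h1
      exact ih.trans (Reach.single ih.mem ⟨hv, hvz⟩ ⟨huv, fun h => hux h.1⟩)
  exact key.mono Set.inter_subset_right

lemma menger_sepB {r : W → W → Prop} {A B : Set W} {x y : W} {Z Y : Finset W}
    (hZ : ∀ a ∈ A, ∀ b ∈ B, ¬ Reach (fun u v => r u v ∧ ¬ (u = x ∧ v = y)) (↑Z)ᶜ a b)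
    (hY : ∀ a ∈ ((↑Z : Set W) ∪ {y}), ∀ b ∈ B,
      ¬ Reach (fun u v => r u v ∧ ¬ (u = x ∧ v = y)) (↑Y)ᶜ a b) :
    ∀ a ∈ A, ∀ b ∈ B, ¬ Reach r (↑Y)ᶜ a b := by
  intro a ha b hb h
  have hb0 : b ∈ ((↑Y : Set W)ᶜ) := h.mem
  refine hZ a ha b hb ?_
  have key : Reach (fun u v => r u v ∧ ¬ (u = x ∧ v = y)) ((↑Y)ᶜ ∩ (↑Z)ᶜ) a b := by
    refine h.ind_head (fun v => Reach (fun u v => r u v ∧ ¬ (u = x ∧ v = y)) ((↑Y)ᶜ ∩ (↑Z)ᶜ) v b) ?_ ?_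
    · refine Reach.refl ⟨hb0, fun hz => hY b (Or.inl hz) b hb (Reach.refl hb0)⟩
    · intro u v hu huv _ ih
      have hvy : v ≠ y := fun hvy => hY v (Or.inr hvy) b hb (ih.mono Set.inter_subset_left)
      have h1 : Reach (fun u v => r u v ∧ ¬ (u = x ∧ v = y)) ((↑Y)ᶜ) u b :=
        (Reach.single hu ih.1.1 ⟨huv, fun h => hvy h.2⟩).trans (ih.mono Set.inter_subset_left)
      have huz : u ∈ (↑Z : Set W)ᶜ := fun hz => hY u (Or.inl hz) b hb h1
      exact Reach.trans (b := v) (Reach.single ⟨hu, huz⟩ ih.1 ⟨huv, fun h => hvy h.2⟩) ih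
  exact key.mono Set.inter_subset_right

def Sep (r : W → W → Prop) (A B : Set W) (Z : Finset W) : Prop :=
  ∀ a ∈ A, ∀ b ∈ B, ¬ Reach r (↑Z)ᶜ a b

def Paths (r : W → W → Prop) (t : W → ℕ) (A B : Set W) (n : ℕ) : Prop :=
  ∃ (S : Fin n → Set W) (a b : Fin n → W), (∀ i, a i ∈ A) ∧ (∀ i, b i ∈ B) ∧
    (∀ i, IsPath r t (S i) (a i) (b i)) ∧ ∀ i j, i ≠ j → Disjoint (S i) (S j)

/-- a family of `n` disjoint paths into a set of size `n` is onto, and meets the set only at ends -/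
lemma ends_bij {n : ℕ} (S : Fin n → Set W) (c : Fin n → W) (Z : Finset W) (hZ : Z.card = n)
    (hc : ∀ i, c i ∈ Z) (hS : ∀ i, c i ∈ S i) (hd : ∀ i j, i ≠ j → Disjoint (S i) (S j)) :
    (∀ z ∈ Z, ∃ i, c i = z) ∧ ∀ i, ∀ z ∈ Z, z ∈ S i → z = c i := by
  classical
  have hinj : Function.Injective c := by
    intro i j hij
    by_contra hne
    exact Set.disjoint_left.1 (hd i j hne) (hS i) (hij ▸ hS j)
  have him : Finset.univ.image c = Z := by
    refine Finset.eq_of_subset_of_card_le ?_ ?_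
    · intro z hz
      obtain ⟨i, _, rfl⟩ := Finset.mem_image.1 hz
      exact hc i
    · rw [Finset.card_image_of_injective _ hinj, hZ]; simp
  have h1 : ∀ z ∈ Z, ∃ i, c i = z := by
    intro z hz
    rw [← him] at hz
    obtain ⟨i, _, h⟩ := Finset.mem_image.1 hz
    exact ⟨i, h⟩
  refine ⟨h1, ?_⟩
  intro i z hz hzi
  obtain ⟨j, rfl⟩ := h1 z hz
  by_contra hne
  have : i ≠ j := fun h => hne (by rw [h])
  exact Set.disjoint_left.1 (hd i j this) hzi (hS j)

theorem menger [Finite W] (t : W → ℕ) (n : ℕ) : ∀ (E : ℕ) (r : W → W → Prop), Top r t →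
    {e : W × W | r e.1 e.2}.ncard = E → ∀ (A B : Set W),
    (∀ Z : Finset W, Sep r A B Z → n ≤ Z.card) → Paths r t A B n := by
  classical
  intro E
  induction E using Nat.strong_induction_on with
  | _ E ih =>
  intro r ht hE A B hAB
  by_cases hne : ∃ x y, r x y
  swap
  · push Not at hne
    have hfin : (A ∩ B).Finite := Set.toFinite _
    have hc := hAB hfin.toFinset (by
      intro a ha b hb h
      have : b = a := h.ind (fun v => v = a) rfl (fun u v _ _ h _ => absurd h (hne u v))
      subst this
      exact h.1 (by simp [ha, hb]))
    obtain ⟨Y, hY, hYc⟩ := Finset.exists_subset_card_eq hc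
    let e := Y.equivFinOfCardEq hYc
    have hm : ∀ i, (e.symm i : W) ∈ A ∩ B := fun i => by
      have := hY (e.symm i).2
      simpa using this
    refine ⟨fun i => {(e.symm i : W)}, fun i => e.symm i, fun i => e.symm i, fun i => (hm i).1,
      fun i => (hm i).2, fun i => IsPath.single r ht.1 _, ?_⟩
    intro i j hij
    rw [Set.disjoint_singleton]
    intro h
    exact hij (e.symm.injective (Subtype.ext h))
  obtain ⟨x, y, hxy⟩ := hne
  set r' : W → W → Prop := fun u v => r u v ∧ ¬ (u = x ∧ v = y) with hr'
  have hsub : ∀ u v, r' u v → r u v := fun u v h => h.1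
  have ht' : Top r' t := ⟨ht.1, fun u v h => ht.2 u v h.1⟩
  have hlt : {e : W × W | r' e.1 e.2}.ncard < E := by
    rw [← hE]
    refine Set.ncard_lt_ncard ?_ (Set.toFinite _)
    refine ⟨fun e he => he.1, fun h => ?_⟩
    have := h (show (x, y) ∈ {e : W × W | r e.1 e.2} from hxy)
    exact this.2 ⟨rfl, rfl⟩
  by_cases hall : ∀ Z : Finset W, Sep r' A B Z → n ≤ Z.card
  · obtain ⟨S, a, b, h1, h2, h3, h4⟩ := ih _ hlt r' ht' rfl A B hall
    exact ⟨S, a, b, h1, h2, fun i => (h3 i).mono' hsub, h4⟩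
  push Not at hall
  obtain ⟨Z, hZ, hZn⟩ := hall
  have hsA := ih _ hlt r' ht' rfl A ((↑Z : Set W) ∪ {x})
    (fun Y hY => hAB Y (menger_sepA hZ hY))
  have hsB := ih _ hlt r' ht' rfl ((↑Z : Set W) ∪ {y}) B
    (fun Y hY => hAB Y (menger_sepB hZ hY))
  -- sizes
  have hcx : n ≤ (insert x Z).card := hAB _ (menger_sepA hZ (by
    intro a ha b hb h
    have := h.mem
    apply this
    rcases hb with hb | hb
    · simp; exact Or.inr hb
    · simp; exact Or.inl hb))
  have hcy : n ≤ (insert y Z).card := hAB _ (menger_sepB hZ (by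
    intro a ha b hb h
    have := h.1
    apply this
    rcases ha with ha | ha
    · simp; exact Or.inr ha
    · simp; exact Or.inl ha))
  have hxZ : x ∉ Z := fun h => by rw [Finset.insert_eq_of_mem h] at hcx; omega
  have hyZ : y ∉ Z := fun h => by rw [Finset.insert_eq_of_mem h] at hcy; omega
  rw [Finset.card_insert_of_notMem hxZ] at hcx
  have hcx' : (insert x Z).card = n := by rw [Finset.card_insert_of_notMem hxZ]; omega
  have hcy' : (insert y Z).card = n := by rw [Finset.card_insert_of_notMem hyZ]; omega
  obtain ⟨P, a, c, ha, hc, hP, hPd⟩ := hsA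
  obtain ⟨Q, d, b, hd, hb, hQ, hQd⟩ := hsB
  have hc' : ∀ i, c i ∈ insert x Z := fun i => by
    rcases hc i with h | h
    · exact Finset.mem_insert_of_mem h
    · rw [Set.mem_singleton_iff.1 h]; exact Finset.mem_insert_self _ _
  have hd' : ∀ i, d i ∈ insert y Z := fun i => by
    rcases hd i with h | h
    · exact Finset.mem_insert_of_mem h
    · rw [Set.mem_singleton_iff.1 h]; exact Finset.mem_insert_self _ _
  obtain ⟨hcs, hcu⟩ := ends_bij P c _ hcx' hc' (fun i => (hP i).hb) hPd
  obtain ⟨hds, hdu⟩ := ends_bij Q d _ hcy' hd' (fun i => (hQ i).ha) hQd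
  have hmatch : ∀ i, ∃ j, (c i ∈ Z ∧ d j = c i) ∨ (c i = x ∧ d j = y) := by
    intro i
    rcases Finset.mem_insert.1 (hc' i) with h | h
    · obtain ⟨j, hj⟩ := hds y (Finset.mem_insert_self _ _)
      exact ⟨j, Or.inr ⟨h, hj⟩⟩
    · obtain ⟨j, hj⟩ := hds (c i) (Finset.mem_insert_of_mem h)
      exact ⟨j, Or.inl ⟨h, hj⟩⟩
  choose π hπ using hmatch
  have hcinj : ∀ i j, c i = c j → i = j := by
    intro i j hij
    by_contra hne
    exact Set.disjoint_left.1 (hPd i j hne) (hP i).hb (hij ▸ (hP j).hb)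
  have hπc : ∀ i j, d (π i) = d (π j) → i = j := by
    intro i j hij
    apply hcinj
    rcases hπ i with ⟨h1, h2⟩ | ⟨h1, h2⟩ <;> rcases hπ j with ⟨h3, h4⟩ | ⟨h3, h4⟩
    · rw [← h2, ← h4, hij]
    · exfalso; apply hyZ; rw [← h4, ← hij, h2]; exact h1
    · exfalso; apply hyZ; rw [← h2, hij, h4]; exact h3
    · rw [h1, h3]
  have hcross : ∀ i i', i ≠ i' → Disjoint (P i) (Q (π i')) := by
    intro i i' hne
    rw [Set.disjoint_left]
    intro v hvP hvQ
    by_cases hvZ : v ∈ Z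
    · have h1 := hcu i v (Finset.mem_insert_of_mem hvZ) hvP
      have h2 := hdu _ v (Finset.mem_insert_of_mem hvZ) hvQ
      rcases hπ i' with ⟨h3, h4⟩ | ⟨h3, h4⟩
      · exact hne (hcinj _ _ (by rw [← h4, ← h2, h1]))
      · exact hyZ (by rw [← h4, ← h2]; exact hvZ)
    · refine hZ _ (ha i) _ (hb (π i')) (Reach.trans (b := v) ?_ ?_)
      · refine (((hP i).pre hvP).window ht').mono ?_
        rintro w ⟨hw, hw1, hw2⟩ hwZ
        have h1 := hcu i w (Finset.mem_insert_of_mem hwZ) hw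
        have h2 := (hP i).hi v hvP
        have : v = w := ht.1 (by rw [h1] at hw2 ⊢; omega)
        exact hvZ (this ▸ hwZ)
      · refine (((hQ _).suf hvQ).window ht').mono ?_
        rintro w ⟨hw, hw1, hw2⟩ hwZ
        have h1 := hdu _ w (Finset.mem_insert_of_mem hwZ) hw
        have h2 := (hQ _).lo v hvQ
        have : v = w := ht.1 (by rw [h1] at hw1 ⊢; omega)
        exact hvZ (this ▸ hwZ)
  refine ⟨fun i => P i ∪ Q (π i), a, fun i => b (π i), ha, fun i => hb _, ?_, ?_⟩
  · intro i
    refine ((hP i).mono' hsub).glue ht ((hQ _).mono' hsub) ?_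
    rcases hπ i with ⟨_, h2⟩ | ⟨h1, h2⟩
    · exact Or.inl h2.symm
    · right; rw [h1, h2]; exact hxy
  · intro i j hij
    have h1 : π i ≠ π j := fun h => hij (hπc i j (by rw [h]))
    rw [Set.disjoint_union_left, Set.disjoint_union_right, Set.disjoint_union_right]
    exact ⟨⟨hPd _ _ hij, hcross _ _ hij⟩, (hcross _ _ hij.symm).symm, hQd _ _ h1⟩

end

end EPx

namespace EPx

open Relation

/-! ### Monotone linkages -/

def rv {K : ℕ} (ε : Bool) (l : Fin K) : Fin K := if ε then l else l.rev

def Rt {W : Type} (r : W → W → Prop) (t : W → ℕ) {K : ℕ} (p q : Fin K → W) (ε : Bool) : Prop :=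
  ∃ S : Fin K → Set W, (∀ l, IsPath r t (S l) (p l) (q (rv ε l))) ∧
    ∀ l l', l ≠ l' → Disjoint (S l) (S l')

lemma rv_rv {K : ℕ} (ε : Bool) (l : Fin K) : rv ε (rv ε l) = l := by
  unfold rv; cases ε <;> simp

lemma mono_paths (K : ℕ) : ∃ N : ℕ, ∀ (W : Type) (r : W → W → Prop) (t : W → ℕ) (p q : ℕ → W)
    (I J : Set ℕ), Paths r t (p '' I) (q '' J) N →
    ∃ (ε : Bool) (x y : Fin K → ℕ), StrictMono x ∧ StrictMono y ∧ (∀ l, x l ∈ I) ∧ (∀ l, y l ∈ J) ∧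
      Rt r t (p ∘ x) (q ∘ y) ε := by
  obtain ⟨N1, h1⟩ := erdSze K
  obtain ⟨N, h2⟩ := erdSze N1
  refine ⟨N, ?_⟩
  rintro W r t p q I J ⟨S, a, b, ha, hb, hS, hd⟩
  choose x hxI hx using ha
  choose y hyJ hy using hb
  have hxi : ∀ i j, x i = x j → i = j := by
    intro i j hij
    by_contra hne
    refine Set.disjoint_left.1 (hd i j hne) (hS i).ha ?_
    rw [← hx i, hij, hx j]; exact (hS j).ha
  have hyi : ∀ i j, y i = y j → i = j := by
    intro i j hij
    by_contra hne
    refine Set.disjoint_left.1 (hd i j hne) (hS i).hb ?_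
    rw [← hy i, hij, hy j]; exact (hS j).hb
  let f : ℕ → ℕ := fun i => if h : i < N then x ⟨i, h⟩ else 0
  have hf : ∀ i (h : i < N), f i = x ⟨i, h⟩ := fun i h => by simp [f, h]
  obtain ⟨g1, hg1, hg1N, hm1⟩ := h2 f (by
    intro i j hi hj hij
    rw [hf i hi, hf j hj] at hij
    simpa using hxi _ _ hij)
  let f' : ℕ → ℕ := fun i => if h : g1 i < N then y ⟨g1 i, h⟩ else 0
  have hf' : ∀ i (h : g1 i < N), f' i = y ⟨g1 i, h⟩ := fun i h => by simp [f', h]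
  obtain ⟨g2, hg2, hg2N, hm2⟩ := h1 f' (by
    intro i j hi hj hij
    rw [hf' i (hg1N i hi), hf' j (hg1N j hj)] at hij
    have := hyi _ _ hij
    exact hg1.injective (by simpa using this))
  let e : Fin K → Fin N := fun i => ⟨g1 (g2 i), hg1N _ (hg2N _ i.2)⟩
  have hei : Function.Injective e := by
    intro i j hij
    have : g1 (g2 i) = g1 (g2 j) := by simpa [e] using hij
    exact Fin.ext (hg2.injective (hg1.injective this))
  have hX : StrictMono (x ∘ e) ∨ StrictMono (x ∘ e ∘ Fin.rev) := by
    rcases hm1 with h | h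
    · left; intro i j hij
      have := h (g2 i) (g2 j) (hg2 hij) (hg2N _ j.2)
      rw [hf _ (hg1N _ (hg2N _ i.2)), hf _ (hg1N _ (hg2N _ j.2))] at this
      exact this
    · right; intro i j hij
      have hij' : j.rev < i.rev := Fin.rev_lt_rev.2 hij
      have := h (g2 j.rev) (g2 i.rev) (hg2 hij') (hg2N _ i.rev.2)
      rw [hf _ (hg1N _ (hg2N _ i.rev.2)), hf _ (hg1N _ (hg2N _ j.rev.2))] at this
      exact this
  have hY : StrictMono (y ∘ e) ∨ StrictMono (y ∘ e ∘ Fin.rev) := by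
    rcases hm2 with h | h
    · left; intro i j hij
      have := h i j hij j.2
      rw [hf' _ (hg1N _ (hg2N _ i.2)), hf' _ (hg1N _ (hg2N _ j.2))] at this
      exact this
    · right; intro i j hij
      have hij' : j.rev < i.rev := Fin.rev_lt_rev.2 hij
      have := h j.rev i.rev hij' i.rev.2
      rw [hf' _ (hg1N _ (hg2N _ i.rev.2)), hf' _ (hg1N _ (hg2N _ j.rev.2))] at this
      exact this
  have hS' : ∀ i, IsPath r t (S i) (p (x i)) (q (y i)) := fun i => by
    rw [hx, hy]; exact hS i
  rcases hX with hX | hX <;> rcases hY with hY | hY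
  · refine ⟨true, x ∘ e, y ∘ e, hX, hY, fun l => hxI _, fun l => hyJ _, S ∘ e, ?_, ?_⟩
    · intro l; simpa [rv] using hS' (e l)
    · intro l l' hl; exact hd _ _ (fun h => hl (hei h))
  · refine ⟨false, x ∘ e, y ∘ e ∘ Fin.rev, hX, hY, fun l => hxI _, fun l => hyJ _, S ∘ e, ?_, ?_⟩
    · intro l; simpa [rv] using hS' (e l)
    · intro l l' hl; exact hd _ _ (fun h => hl (hei h))
  · refine ⟨false, x ∘ e ∘ Fin.rev, y ∘ e, hX, hY, fun l => hxI _, fun l => hyJ _,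
      S ∘ e ∘ Fin.rev, ?_, ?_⟩
    · intro l; simpa [rv] using hS' (e l.rev)
    · intro l l' hl; exact hd _ _ (fun h => hl (Fin.rev_injective (hei h)))
  · refine ⟨true, x ∘ e ∘ Fin.rev, y ∘ e ∘ Fin.rev, hX, hY, fun l => hxI _, fun l => hyJ _,
      S ∘ e ∘ Fin.rev, ?_, ?_⟩
    · intro l; simpa [rv] using hS' (e l.rev)
    · intro l l' hl; exact hd _ _ (fun h => hl (Fin.rev_injective (hei h)))

/-- Menger + Erdos-Szekeres -/
lemma mengerMono (K : ℕ) : ∃ N : ℕ, ∀ (W : Type) [Finite W] (r : W → W → Prop) (t : W → ℕ),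
    Top r t → ∀ (p q : ℕ → W) (I J : Set ℕ),
    (∀ Z : Finset W, Z.card < N → ∃ i ∈ I, ∃ j ∈ J, Reach r (↑Z)ᶜ (p i) (q j)) →
    ∃ (ε : Bool) (x y : Fin K → ℕ), StrictMono x ∧ StrictMono y ∧ (∀ l, x l ∈ I) ∧ (∀ l, y l ∈ J) ∧
      Rt r t (p ∘ x) (q ∘ y) ε := by
  obtain ⟨N, hN⟩ := mono_paths K
  refine ⟨N, ?_⟩
  intro W _ r t ht p q I J h
  refine hN W r t p q I J (menger t N _ r ht rfl _ _ ?_)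
  intro Z hZ
  by_contra hc
  obtain ⟨i, hi, j, hj, hr⟩ := h Z (by omega)
  exact hZ _ ⟨i, hi, rfl⟩ _ ⟨j, hj, rfl⟩ hr

lemma append_tup {K M : ℕ} {x y : Fin K → ℕ} (hx : Tup K M x) (hy : Tup K M y)
    (hxy : ∀ a b, x a < y b) : Tup (K + K) M (Fin.append x y) := by
  constructor
  · intro i j hij
    induction i using Fin.addCases with
    | left i =>
      induction j using Fin.addCases with
      | left j =>
        rw [Fin.append_left, Fin.append_left]
        exact hx.1 (by rw [Fin.lt_def] at hij ⊢; simp only [Fin.val_castAdd] at hij; exact hij)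
      | right j => rw [Fin.append_left, Fin.append_right]; exact hxy _ _
    | right i =>
      induction j using Fin.addCases with
      | left j =>
        exfalso; simp only [Fin.lt_def, Fin.val_natAdd, Fin.val_castAdd] at hij; omega
      | right j =>
        rw [Fin.append_right, Fin.append_right]
        exact hy.1 (by rw [Fin.lt_def] at hij ⊢; simp only [Fin.val_natAdd] at hij; omega)
  · intro i
    induction i using Fin.addCases with
    | left i => rw [Fin.append_left]; exact hx.2 i
    | right i => rw [Fin.append_right]; exact hy.2 i

lemma pull_tup {K M : ℕ} {g : ℕ → ℕ} (hg : StrictMono g) (x : Fin K → ℕ) (hx : StrictMono x)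
    (h : ∀ l, ∃ m < M, x l = g m) : ∃ x' : Fin K → ℕ, Tup K M x' ∧ x = g ∘ x' := by
  choose x' h1 h2 using h
  refine ⟨x', ⟨?_, h1⟩, funext h2⟩
  intro i j hij
  have := hx hij
  rw [h2, h2] at this
  exact hg.lt_iff_lt.1 this

lemma absMR (K s M : ℕ) : ∃ n, ∀ F : Bool → (Fin K → ℕ) → (Fin K → ℕ) → Prop,
    (∀ I J : Finset ℕ, I.card = s → J.card = s → (∀ i ∈ I, i < n) → (∀ j ∈ J, j < n) →
      (∀ i ∈ I, ∀ j ∈ J, i < j) →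
      ∃ ε x y, StrictMono x ∧ StrictMono y ∧ (∀ l, x l ∈ I) ∧ (∀ l, y l ∈ J) ∧ F ε x y) →
    ∃ g : ℕ → ℕ, StrictMono g ∧ (∀ i < M, g i < n) ∧ ∃ ε, ∀ x y, Tup K M x → Tup K M y →
      (∀ a b, x a < y b) → F ε (g ∘ x) (g ∘ y) := by
  obtain ⟨n, hn⟩ := ramsey (K + K) (Bool → Prop) (max M (s + s))
  refine ⟨n, ?_⟩
  intro F hF
  obtain ⟨g, hg, hgn, hc⟩ := hn (fun z ε => F ε (z ∘ Fin.castAdd K) (z ∘ Fin.natAdd K))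
  refine ⟨g, hg, fun i hi => hgn i (lt_max_of_lt_left hi), ?_⟩
  obtain ⟨ε, x, y, hx, hy, hxI, hyJ, hFxy⟩ := hF ((Finset.range s).image g)
    ((Finset.range s).image (fun i => g (s + i)))
    (by rw [Finset.card_image_of_injective _ hg.injective]; simp)
    (by rw [Finset.card_image_of_injective _ (fun a b h => by simpa using hg.injective h)]; simp)
    (by
      intro i hi
      obtain ⟨a, ha, rfl⟩ := Finset.mem_image.1 hi
      have := Finset.mem_range.1 ha
      exact hgn _ (by omega))
    (by
      intro i hi
      obtain ⟨a, ha, rfl⟩ := Finset.mem_image.1 hi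
      have := Finset.mem_range.1 ha
      exact hgn _ (by omega))
    (by
      intro i hi j hj
      obtain ⟨a, ha, rfl⟩ := Finset.mem_image.1 hi
      obtain ⟨b, hb, rfl⟩ := Finset.mem_image.1 hj
      have := Finset.mem_range.1 ha
      exact hg (by omega))
  obtain ⟨x', hx', rfl⟩ := pull_tup (M := s) hg x hx (by
    intro l
    obtain ⟨a, ha, h⟩ := Finset.mem_image.1 (hxI l)
    exact ⟨a, Finset.mem_range.1 ha, h.symm⟩)
  have hyb : ∀ l, ∃ m, s ≤ m ∧ m < s + s ∧ y l = g m := by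
    intro l
    obtain ⟨a, ha, h⟩ := Finset.mem_image.1 (hyJ l)
    have := Finset.mem_range.1 ha
    exact ⟨s + a, by omega, by omega, h.symm⟩
  obtain ⟨y', hy', rfl⟩ := pull_tup (M := s + s) hg y hy (by
    intro l
    obtain ⟨m, _, h2, h3⟩ := hyb l
    exact ⟨m, h2, h3⟩)
  have hT : Tup (K + K) (max M (s + s)) (Fin.append x' y') := by
    refine append_tup ⟨hx'.1, fun i => ?_⟩ ⟨hy'.1, fun i => lt_max_of_lt_right (hy'.2 i)⟩ ?_
    · have := hx'.2 i
      exact lt_max_of_lt_right (by omega)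
    · intro a b
      obtain ⟨m, h1, _, h3⟩ := hyb b
      have := hg.injective h3
      have h4 := hx'.2 a
      omega
  refine ⟨ε, ?_⟩
  intro u v hu hv huv
  have hT' : Tup (K + K) (max M (s + s)) (Fin.append u v) :=
    append_tup ⟨hu.1, fun i => lt_max_of_lt_left (hu.2 i)⟩
      ⟨hv.1, fun i => lt_max_of_lt_left (hv.2 i)⟩ huv
  have h := congrFun (hc _ _ hT hT') ε
  have e1 : ∀ (a b : Fin K → ℕ), (g ∘ Fin.append a b) ∘ Fin.castAdd K = g ∘ a := fun a b => by
    funext i; simp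
  have e2 : ∀ (a b : Fin K → ℕ), (g ∘ Fin.append a b) ∘ Fin.natAdd K = g ∘ b := fun a b => by
    funext i; simp only [Function.comp_apply, Fin.append_right]
  simp only [e1, e2] at h
  exact h ▸ hFxy

lemma ramsey1 (C : Type) [Finite C] (M : ℕ) : ∃ N, ∀ c : ℕ → C, ∃ g : ℕ → ℕ, StrictMono g ∧
    (∀ i < M, g i < N) ∧ ∀ i i', i < M → i' < M → c (g i) = c (g i') := by
  obtain ⟨N, hN⟩ := ramsey 1 C M
  refine ⟨N, fun c => ?_⟩
  obtain ⟨g, hg, hgN, h⟩ := hN (fun z => c (z 0))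
  refine ⟨g, hg, hgN, fun i i' hi hi' => ?_⟩
  exact h (fun _ => i) (fun _ => i') ⟨Subsingleton.strictMono _, fun _ => hi⟩
    ⟨Subsingleton.strictMono _, fun _ => hi'⟩

lemma ramsey2 (C : Type) [Finite C] (M : ℕ) : ∃ N, ∀ c : ℕ → ℕ → C, ∃ g : ℕ → ℕ, StrictMono g ∧
    (∀ i < M, g i < N) ∧ ∀ i j i' j', i < j → j < M → i' < j' → j' < M →
      c (g i) (g j) = c (g i') (g j') := by
  obtain ⟨N, hN⟩ := ramsey 2 C M
  refine ⟨N, fun c => ?_⟩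
  obtain ⟨g, hg, hgN, h⟩ := hN (fun z => c (z 0) (z 1))
  refine ⟨g, hg, hgN, fun i j i' j' hij hj hij' hj' => ?_⟩
  have hT : ∀ a b, a < b → b < M → Tup 2 M ![a, b] := by
    intro a b hab hb
    refine ⟨?_, ?_⟩
    · rw [Fin.strictMono_iff_lt_succ]; intro k; fin_cases k; simpa using hab
    · intro k; fin_cases k
      · simpa using hab.trans hb
      · simpa using hb
  simpa using h _ _ (hT i j hij hj) (hT i' j' hij' hj')

lemma ramsey4 (C : Type) [Finite C] (M : ℕ) : ∃ N, ∀ c : ℕ → ℕ → ℕ → ℕ → C, ∃ g : ℕ → ℕ,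
    StrictMono g ∧ (∀ i < M, g i < N) ∧ ∀ a b c' d a' b' c'' d', a < b → b < c' → c' < d → d < M →
      a' < b' → b' < c'' → c'' < d' → d' < M →
      c (g a) (g b) (g c') (g d) = c (g a') (g b') (g c'') (g d') := by
  obtain ⟨N, hN⟩ := ramsey 4 C M
  refine ⟨N, fun c => ?_⟩
  obtain ⟨g, hg, hgN, h⟩ := hN (fun z => c (z 0) (z 1) (z 2) (z 3))
  refine ⟨g, hg, hgN, ?_⟩
  intro a b c' d a' b' c'' d' h1 h2 h3 h4 h5 h6 h7 h8
  have hT : ∀ a b c d, a < b → b < c → c < d → d < M → Tup 4 M ![a, b, c, d] := by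
    intro a b c d hab hbc hcd hd
    refine ⟨?_, ?_⟩
    · rw [Fin.strictMono_iff_lt_succ]; intro k; fin_cases k <;> simp <;> assumption
    · intro k; fin_cases k <;> simp <;> omega
  simpa using h _ _ (hT _ _ _ _ h1 h2 h3 h4) (hT _ _ _ _ h5 h6 h7 h8)

end EPx

namespace EPx

open Relation

/-! ### Web or disjoint circuits -/

def Circ {W : Type} (r : W → W → Prop) (src snk : ℕ → W) (k : ℕ) : Prop :=
  ∃ S : Fin k → Set W, (∀ u v, u ≠ v → Disjoint (S u) (S v)) ∧
    ∀ u, ∃ i, TransGen (fun i j => Reach r (S u) (src i) (snk j)) i i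

def NS {W : Type} (r : W → W → Prop) (src snk : ℕ → W) (N r0 : ℕ) : Prop :=
  ∀ n ≥ r0, ∀ I J : Finset ℕ, (∀ i ∈ I, i < N) → (∀ j ∈ J, j < N) → Disjoint I J →
    I.card = n → J.card = n → ∀ Z : Finset W, Z.card < n →
    ∃ i ∈ I, ∃ j ∈ J, Reach r (↑Z)ᶜ (src i) (snk j)

def Fam {W : Type} (r : W → W → Prop) (t : W → ℕ) (src snk : ℕ → W) (P : ℕ → Set W)
    (a b : ℕ → ℕ) (q N : ℕ) : Prop :=
  (∀ i < q, IsPath r t (P i) (src (a i)) (snk (b i))) ∧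
  (∀ i < q, ∀ j < q, i ≠ j → Disjoint (P i) (P j)) ∧
  (∀ i < q, ∀ j < q, a i ≠ b j) ∧ (∀ i < q, a i < N) ∧ (∀ i < q, b i < N)

lemma NS.comp {W : Type} {r : W → W → Prop} {src snk : ℕ → W} {N r0 M : ℕ}
    (h : NS r src snk N r0) {g : ℕ → ℕ} (hg : StrictMono g) (hM : ∀ i < M, g i < N) :
    NS r (src ∘ g) (snk ∘ g) M r0 := by
  intro n hn I J hI hJ hd hcI hcJ Z hZ
  obtain ⟨i, hi, j, hj, hr⟩ := h n hn (I.image g) (J.image g)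
    (by
      intro i hi
      obtain ⟨a, ha, rfl⟩ := Finset.mem_image.1 hi
      exact hM _ (hI _ ha))
    (by
      intro i hi
      obtain ⟨a, ha, rfl⟩ := Finset.mem_image.1 hi
      exact hM _ (hJ _ ha))
    ((Finset.disjoint_image hg.injective).2 hd)
    (by rw [Finset.card_image_of_injective _ hg.injective, hcI])
    (by rw [Finset.card_image_of_injective _ hg.injective, hcJ]) Z hZ
  obtain ⟨a, ha, rfl⟩ := Finset.mem_image.1 hi
  obtain ⟨b, hb, rfl⟩ := Finset.mem_image.1 hj
  exact ⟨a, ha, b, hb, hr⟩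

lemma step1a0 (K M r0 : ℕ) : ∃ N, ∀ (W : Type) [Finite W] (r : W → W → Prop) (t : W → ℕ),
    Top r t → ∀ src snk : ℕ → W, NS r src snk N r0 →
    ∃ γ : ℕ → ℕ, StrictMono γ ∧ (∀ i < M, γ i < N) ∧ ∃ ε : Bool → Bool,
      ∀ b x y, Tup K M x → Tup K M y → (∀ i j, x i < y j) →
        ∃ P : Fin K → Set W, (∀ l, IsPath r t (P l) (src (γ (bif b then x l else y l)))
          (snk (γ (bif b then y (rv (ε b) l) else x (rv (ε b) l))))) ∧
          ∀ l l', l ≠ l' → Disjoint (P l) (P l') := by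
  obtain ⟨s0, hs0⟩ := mengerMono K
  obtain ⟨n1, hn1⟩ := absMR K (max r0 s0) M
  obtain ⟨n0, hn0⟩ := absMR K (max r0 s0) n1
  refine ⟨n0, ?_⟩
  intro W _ r t ht src snk hNS
  obtain ⟨g0, hg0, hg0n, ε0, h0⟩ := hn0 (fun ε x y => Rt r t (src ∘ x) (snk ∘ y) ε) (by
    intro I J hI hJ hIn hJn hIJ
    obtain ⟨ε, x, y, h⟩ := hs0 W r t ht src snk I J (by
      intro Z hZ
      exact hNS _ (le_max_left r0 s0) I J hIn hJn
        (Finset.disjoint_left.2 fun a ha hb => lt_irrefl _ (hIJ a ha a hb)) hI hJ Z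
        (lt_of_lt_of_le hZ (le_max_right _ _)))
    exact ⟨ε, x, y, h⟩)
  have hNS' := hNS.comp hg0 hg0n
  obtain ⟨g1, hg1, hg1n, ε1, h1⟩ := hn1 (fun ε x y => Rt r t (src ∘ g0 ∘ y) (snk ∘ g0 ∘ x) ε) (by
    intro I J hI hJ hIn hJn hIJ
    obtain ⟨ε, y, x, h1, h2, h3, h4, h5⟩ := hs0 W r t ht (src ∘ g0) (snk ∘ g0) J I (by
      intro Z hZ
      exact hNS' _ (le_max_left r0 s0) J I hJn hIn
        (Finset.disjoint_left.2 fun a ha hb => lt_irrefl _ (hIJ a hb a ha)) hJ hI Z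
        (lt_of_lt_of_le hZ (le_max_right _ _)))
    exact ⟨ε, x, y, h2, h1, h4, h3, h5⟩)
  refine ⟨g0 ∘ g1, hg0.comp hg1, fun i hi => hg0n _ (hg1n _ hi), fun b => bif b then ε0 else ε1, ?_⟩
  intro b x y hx hy hxy
  cases b with
  | true =>
    obtain ⟨P, hP, hd⟩ := h0 (g1 ∘ x) (g1 ∘ y) ⟨hg1.comp hx.1, fun i => hg1n _ (hx.2 i)⟩
      ⟨hg1.comp hy.1, fun i => hg1n _ (hy.2 i)⟩ (fun a b => hg1 (hxy a b))
    exact ⟨P, hP, hd⟩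
  | false =>
    obtain ⟨P, hP, hd⟩ := h1 x y hx hy hxy
    exact ⟨P, hP, hd⟩

lemma step1a (K M r0 : ℕ) : ∃ N, ∀ (W : Type) [Finite W] (r : W → W → Prop) (t : W → ℕ),
    Top r t → ∀ src snk : ℕ → W, NS r src snk N r0 →
    ∃ γ : ℕ → ℕ, StrictMono γ ∧ (∀ i < M, γ i < N) ∧ ∃ ε : Bool → Bool,
      ∃ P : Bool → (Fin K → ℕ) → (Fin K → ℕ) → Fin K → Set W,
      (∀ b x y, Tup K M x → Tup K M y → (∀ i j, x i < y j) →
        (∀ l, IsPath r t (P b x y l) (src (γ (bif b then x l else y l)))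
          (snk (γ (bif b then y (rv (ε b) l) else x (rv (ε b) l))))) ∧
          ∀ l l', l ≠ l' → Disjoint (P b x y l) (P b x y l')) ∧
      ∀ A B C D A' B' C' D', Tup K M A → Tup K M B → Tup K M C → Tup K M D →
        Tup K M A' → Tup K M B' → Tup K M C' → Tup K M D' →
        (∀ i j, A i < B j) → (∀ i j, B i < C j) → (∀ i j, C i < D j) →
        (∀ i j, A' i < B' j) → (∀ i j, B' i < C' j) → (∀ i j, C' i < D' j) →
        ∀ b b' i j, (P b A B i ∩ P b' C D j).Nonempty → (P b A' B' i ∩ P b' C' D' j).Nonempty := by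
  classical
  obtain ⟨N3, hN3⟩ := ramsey ((K + K) + (K + K)) (Bool → Bool → Fin K → Fin K → Prop) M
  obtain ⟨N, hN⟩ := step1a0 K N3 r0
  refine ⟨N, ?_⟩
  intro W _ r t ht src snk hNS
  obtain ⟨γ, hγ, hγn, ε, h⟩ := hN W r t ht src snk hNS
  have h' : ∀ b x y, ∃ P : Fin K → Set W, Tup K N3 x → Tup K N3 y → (∀ i j, x i < y j) →
        (∀ l, IsPath r t (P l) (src (γ (bif b then x l else y l)))
          (snk (γ (bif b then y (rv (ε b) l) else x (rv (ε b) l))))) ∧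
          ∀ l l', l ≠ l' → Disjoint (P l) (P l') := by
    intro b x y
    by_cases hh : Tup K N3 x ∧ Tup K N3 y ∧ ∀ i j, x i < y j
    · obtain ⟨P, hP⟩ := h b x y hh.1 hh.2.1 hh.2.2
      exact ⟨P, fun _ _ _ => hP⟩
    · exact ⟨fun _ => ∅, fun h1 h2 h3 => absurd ⟨h1, h2, h3⟩ hh⟩
  choose P hP using h'
  obtain ⟨g, hg, hgn, hc⟩ := hN3 (fun z b b' i j =>
    (P b (fun l => z (Fin.castAdd _ (Fin.castAdd _ l))) (fun l => z (Fin.castAdd _ (Fin.natAdd _ l))) i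
      ∩ P b' (fun l => z (Fin.natAdd _ (Fin.castAdd _ l)))
        (fun l => z (Fin.natAdd _ (Fin.natAdd _ l))) j).Nonempty)
  have hgT : ∀ x, Tup K M x → Tup K N3 (g ∘ x) :=
    fun x hx => ⟨hg.comp hx.1, fun i => hgn _ (hx.2 i)⟩
  refine ⟨γ ∘ g, hγ.comp hg, fun i hi => hγn _ (hgn _ hi), ε,
    fun b x y => P b (g ∘ x) (g ∘ y), ?_, ?_⟩
  · intro b x y hx hy hxy
    obtain ⟨h1, h2⟩ := hP b (g ∘ x) (g ∘ y) (hgT x hx) (hgT y hy) (fun i j => hg (hxy i j))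
    refine ⟨fun l => ?_, h2⟩
    have := h1 l
    cases b <;> exact this
  · intro A B C D A' B' C' D' hA hB hC hD hA' hB' hC' hD' h1 h2 h3 h1' h2' h3' b b' i j hne
    have hT : ∀ A B C D : Fin K → ℕ, Tup K M A → Tup K M B → Tup K M C → Tup K M D →
        (∀ i j, A i < B j) → (∀ i j, B i < C j) → (∀ i j, C i < D j) →
        Tup ((K + K) + (K + K)) M (Fin.append (Fin.append A B) (Fin.append C D)) := by
      intro A B C D hA hB hC hD h1 h2 h3
      refine append_tup (append_tup hA hB h1) (append_tup hC hD h3) ?_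
      intro a b
      induction a using Fin.addCases with
      | left a =>
        induction b using Fin.addCases with
        | left b =>
          rw [Fin.append_left, Fin.append_left]; exact (h1 a b).trans (h2 b b)
        | right b =>
          rw [Fin.append_left, Fin.append_right]; exact ((h1 a b).trans (h2 b b)).trans (h3 b b)
      | right a =>
        induction b using Fin.addCases with
        | left b =>
          rw [Fin.append_right, Fin.append_left]; exact h2 a b
        | right b =>
          rw [Fin.append_right, Fin.append_right]; exact (h2 a b).trans (h3 b b)
    have := hc _ _ (hT A B C D hA hB hC hD h1 h2 h3) (hT A' B' C' D' hA' hB' hC' hD' h1' h2' h3')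
    have := congrFun (congrFun (congrFun (congrFun this b) b') i) j
    simp only [Function.comp_apply, Fin.append_left, Fin.append_right] at this
    exact this ▸ hne

lemma step1 (k q r0 : ℕ) : ∃ N, ∀ (W : Type) [Finite W] (r : W → W → Prop) (t : W → ℕ),
    Top r t → ∀ src snk : ℕ → W, NS r src snk N r0 → Circ r src snk k ∨
    ∃ (P Q : ℕ → Set W) (a b a' b' : ℕ → ℕ), Fam r t src snk P a b q N ∧
      Fam r t src snk Q a' b' q N ∧ ∀ i < q, ∀ j < q, (P i ∩ Q j).Nonempty := by
  classical
  rcases Nat.eq_zero_or_pos k with rfl | hk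
  · exact ⟨0, fun W _ r t ht src snk h => Or.inl ⟨fun u => u.elim0, fun u => u.elim0, fun u => u.elim0⟩⟩
  obtain ⟨K, hK⟩ := ramsey2 (Bool → Bool → Prop) (2 * q + 2 * k)
  obtain ⟨N, hN⟩ := step1a K (4 * K * (k + 1)) r0
  refine ⟨N, ?_⟩
  intro W _ r t ht src snk hNS
  obtain ⟨γ, hγ, hγn, ε, P, hP, hE⟩ := hN W r t ht src snk hNS
  let Bs : ℕ → Fin K → ℕ := fun c l => c * K + l
  have hBs : ∀ c < 4, Tup K (4 * K * (k + 1)) (Bs c) := by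
    intro c hc
    refine ⟨fun i j hij => ?_, fun i => ?_⟩
    · simp only [Bs]; have : (i : ℕ) < j := hij; omega
    · simp only [Bs]
      have := i.2
      have h1 : c * K ≤ 3 * K := Nat.mul_le_mul_right _ (by omega)
      have h2 : 4 * K * 1 ≤ 4 * K * (k + 1) := Nat.mul_le_mul_left _ (by omega)
      omega
  have hBlt : ∀ c, ∀ i j, Bs c i < Bs (c + 1) j := by
    intro c i j
    simp only [Bs, add_mul]
    have := i.2
    omega
  let E : Bool → Bool → Fin K → Fin K → Prop := fun b b' i j =>
    (P b (Bs 0) (Bs 1) i ∩ P b' (Bs 2) (Bs 3) j).Nonempty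
  obtain ⟨g, hg, hgK, hc⟩ := hK (fun i j b b' => ∃ (hi : i < K) (hj : j < K), E b b' ⟨i, hi⟩ ⟨j, hj⟩)
  have hKpos : 0 < K := by have := hgK 0 (by omega); omega
  let pos : ℕ → Fin K := fun i => if h : g i < K then ⟨g i, h⟩ else ⟨0, hKpos⟩
  have hpos : ∀ i (hi : i < 2 * q + 2 * k), pos i = ⟨g i, hgK i hi⟩ := by
    intro i hi
    simp only [pos, dif_pos (hgK i hi)]
  have hposne : ∀ i < 2 * q + 2 * k, ∀ j < 2 * q + 2 * k, i ≠ j → pos i ≠ pos j := by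
    intro i hi j hj hij h
    rw [hpos i hi, hpos j hj] at h
    exact hij (hg.injective (by simpa using h))
  have hconst : ∀ b b' i j i' j', i < j → j < 2 * q + 2 * k → i' < j' → j' < 2 * q + 2 * k →
      E b b' (pos i) (pos j) → E b b' (pos i') (pos j') := by
    intro b b' i j i' j' hij hj hij' hj' h
    have h1 := congrFun (congrFun (hc i j i' j' hij hj hij' hj') b) b'
    have h2 : ∃ (hi : g i < K) (hj : g j < K), E b b' ⟨g i, hi⟩ ⟨g j, hj⟩ := by
      rw [hpos i (by omega), hpos j hj] at h
      exact ⟨_, _, h⟩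
    rw [h1] at h2
    obtain ⟨_, _, h3⟩ := h2
    rw [hpos i' (by omega), hpos j' hj']
    exact h3
  by_cases hex : ∃ b b' i j, i < j ∧ j < 2 * q + 2 * k ∧ E b b' (pos i) (pos j)
  · right
    obtain ⟨b, b', i0, j0, hij0, hj0, hE0⟩ := hex
    have hfam : ∀ (b : Bool) (c o : ℕ), c < 3 → o ≤ q →
        Fam r t src snk (fun i => P b (Bs c) (Bs (c + 1)) (pos (o + i)))
        (fun i => γ (bif b then Bs c (pos (o + i)) else Bs (c + 1) (pos (o + i))))
        (fun i => γ (bif b then Bs (c + 1) (rv (ε b) (pos (o + i)))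
          else Bs c (rv (ε b) (pos (o + i))))) q N := by
      intro b c o hc ho
      obtain ⟨h1, h2⟩ := hP b (Bs c) (Bs (c + 1)) (hBs _ (by omega)) (hBs _ (by omega)) (hBlt c)
      refine ⟨fun i hi => h1 _, ?_, ?_, ?_, ?_⟩
      · intro i hi j hj hij
        exact h2 _ _ (hposne _ (by omega) _ (by omega) (by omega))
      · intro i hi j hj h
        have := hγ.injective h
        cases b
        · have h3 := hBlt c (rv (ε false) (pos (o + j))) (pos (o + i))
          simp only [cond_false] at this
          omega
        · have h3 := hBlt c (pos (o + i)) (rv (ε true) (pos (o + j)))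
          simp only [cond_true] at this
          omega
      · intro i hi
        apply hγn
        cases b
        · exact (hBs (c + 1) (by omega)).2 _
        · exact (hBs c (by omega)).2 _
      · intro i hi
        apply hγn
        cases b
        · exact (hBs c (by omega)).2 _
        · exact (hBs (c + 1) (by omega)).2 _
    refine ⟨_, _, _, _, _, _, hfam b 0 0 (by omega) (by omega), hfam b' 2 q (by omega) le_rfl, ?_⟩
    intro i hi j hj
    exact hconst b b' i0 j0 (0 + i) (q + j) hij0 hj0 (by omega) (by omega) hE0
  · left
    push Not at hex
    let sh : ℕ → Fin K → Fin K → ℕ := fun c i l => c + K + l - i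
    have hmul : ∀ u < k, 4 * K * u + 4 * K ≤ 4 * K * (k + 1) := by
      intro u hu
      have : 4 * K * (u + 1) ≤ 4 * K * (k + 1) := Nat.mul_le_mul_left _ (by omega)
      rw [mul_add, mul_one] at this
      exact this
    have hsh1 : ∀ u < k, ∀ i, Tup K (4 * K * (k + 1)) (sh (4 * K * u) i) := by
      intro u hu i
      refine ⟨fun a b hab => ?_, fun a => ?_⟩
      · have : (a : ℕ) < b := hab
        have := i.2
        simp only [sh]; omega
      · have := a.2
        have := hmul u hu
        simp only [sh]; omega
    have hsh2 : ∀ u < k, ∀ i, Tup K (4 * K * (k + 1)) (sh (4 * K * u + 2 * K) i) := by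
      intro u hu i
      refine ⟨fun a b hab => ?_, fun a => ?_⟩
      · have : (a : ℕ) < b := hab
        have := i.2
        simp only [sh]; omega
      · have := a.2
        have := hmul u hu
        simp only [sh]; omega
    have hlt : ∀ u i j, ∀ a b, sh (4 * K * u) i a < sh (4 * K * u + 2 * K) j b := by
      intro u i j a b
      have := i.2
      have := j.2
      have := a.2
      have := b.2
      simp only [sh]; omega
    have hlt2 : ∀ u v, u < v → ∀ i j, ∀ a b, sh (4 * K * u + 2 * K) i a < sh (4 * K * v) j b := by
      intro u v huv i j a b
      have h1 := i.2
      have h2 := j.2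
      have h3 := a.2
      have h4 := b.2
      have : 4 * K * (u + 1) ≤ 4 * K * v := Nat.mul_le_mul_left _ (by omega)
      rw [mul_add, mul_one] at this
      simp only [sh]; omega
    have hsi : ∀ c i, sh c i i = c + K := by
      intro c i; simp only [sh]; omega
    -- forward and backward paths
    let T : Bool → ℕ → Set W := fun b u => bif b then
      P true (sh (4 * K * u) (pos (2 * u))) (sh (4 * K * u + 2 * K) (rv (ε true) (pos (2 * u)))) (pos (2 * u))
      else P false (sh (4 * K * u) (rv (ε false) (pos (2 * u + 1)))) (sh (4 * K * u + 2 * K) (pos (2 * u + 1)))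
        (pos (2 * u + 1))
    have hd : ∀ u v, u < v → v < k → ∀ b b', Disjoint (T b u) (T b' v) := by
      intro u v huv hv b b'
      rw [Set.disjoint_iff_inter_eq_empty, ← Set.not_nonempty_iff_eq_empty]
      intro hne
      cases b <;> cases b'
      · exact hex false false (2 * u + 1) (2 * v + 1) (by omega) (by omega)
          (hE _ _ _ _ _ _ _ _ (hsh1 u (by omega) _) (hsh2 u (by omega) _) (hsh1 v hv _) (hsh2 v hv _)
            (hBs 0 (by omega)) (hBs 1 (by omega)) (hBs 2 (by omega)) (hBs 3 (by omega))
            (hlt _ _ _) (hlt2 _ _ huv _ _) (hlt _ _ _) (hBlt 0) (hBlt 1) (hBlt 2) _ _ _ _ hne)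
      · exact hex false true (2 * u + 1) (2 * v) (by omega) (by omega)
          (hE _ _ _ _ _ _ _ _ (hsh1 u (by omega) _) (hsh2 u (by omega) _) (hsh1 v hv _) (hsh2 v hv _)
            (hBs 0 (by omega)) (hBs 1 (by omega)) (hBs 2 (by omega)) (hBs 3 (by omega))
            (hlt _ _ _) (hlt2 _ _ huv _ _) (hlt _ _ _) (hBlt 0) (hBlt 1) (hBlt 2) _ _ _ _ hne)
      · exact hex true false (2 * u) (2 * v + 1) (by omega) (by omega)
          (hE _ _ _ _ _ _ _ _ (hsh1 u (by omega) _) (hsh2 u (by omega) _) (hsh1 v hv _) (hsh2 v hv _)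
            (hBs 0 (by omega)) (hBs 1 (by omega)) (hBs 2 (by omega)) (hBs 3 (by omega))
            (hlt _ _ _) (hlt2 _ _ huv _ _) (hlt _ _ _) (hBlt 0) (hBlt 1) (hBlt 2) _ _ _ _ hne)
      · exact hex true true (2 * u) (2 * v) (by omega) (by omega)
          (hE _ _ _ _ _ _ _ _ (hsh1 u (by omega) _) (hsh2 u (by omega) _) (hsh1 v hv _) (hsh2 v hv _)
            (hBs 0 (by omega)) (hBs 1 (by omega)) (hBs 2 (by omega)) (hBs 3 (by omega))
            (hlt _ _ _) (hlt2 _ _ huv _ _) (hlt _ _ _) (hBlt 0) (hBlt 1) (hBlt 2) _ _ _ _ hne)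
    refine ⟨fun u => T true u ∪ T false u, ?_, ?_⟩
    · intro u v huv
      have : ∀ b b', Disjoint (T b u) (T b' v) := by
        intro b b'
        rcases lt_or_gt_of_ne (fun h => huv (Fin.ext h) : (u : ℕ) ≠ v) with h | h
        · exact hd u v h v.2 b b'
        · exact (hd v u h u.2 b' b).symm
      rw [Set.disjoint_union_left, Set.disjoint_union_right, Set.disjoint_union_right]
      exact ⟨⟨this _ _, this _ _⟩, this _ _, this _ _⟩
    · intro u
      have hf := ((hP true _ _ (hsh1 u u.2 (pos (2 * u))) (hsh2 u u.2 (rv (ε true) (pos (2 * u))))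
        (hlt _ _ _)).1 (pos (2 * u))).reach
      have hb := ((hP false _ _ (hsh1 u u.2 (rv (ε false) (pos (2 * u + 1))))
        (hsh2 u u.2 (pos (2 * u + 1))) (hlt _ _ _)).1 (pos (2 * u + 1))).reach
      simp only [cond_true, cond_false, hsi] at hf hb
      refine ⟨γ (4 * K * u + K), (TransGen.single ?_).tail (b := γ (4 * K * u + 2 * K + K)) ?_⟩
      · exact hf.mono Set.subset_union_left
      · exact hb.mono Set.subset_union_right

end EPx

namespace EPx

open Relation

/-! ### Cutting the web -/

def Cut (q : ℕ) (τ : ℕ → ℕ → ℕ) (n m : ℕ) : Prop :=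
  ∃ (θ : ℕ) (f ρ ρ' : ℕ → ℕ), StrictMono f ∧ StrictMono ρ ∧ StrictMono ρ' ∧
    (∀ j < n, f j < q) ∧ (∀ i < m, ρ i < q) ∧ (∀ i < m, ρ' i < q) ∧
    (∀ i < m, ∀ j < n, τ (ρ i) (f j) ≤ θ) ∧ (∀ i < m, ∀ j < n, θ < τ (ρ' i) (f j))

lemma cut (n m : ℕ) : ∃ q, ∀ τ : ℕ → ℕ → ℕ,
    (∀ i < q, ∀ j < q, ∀ i' < q, ∀ j' < q, τ i j = τ i' j' → i = i' ∧ j = j') →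
    Cut q τ n m ∨ Cut q (fun i j => τ j i) n m := by
  obtain ⟨q, hq⟩ := ramsey4 (Prop × Prop) (4 * n + 4 * m + 10)
  refine ⟨q, ?_⟩
  intro τ hτ
  obtain ⟨G, hG, hGq, hc⟩ := hq (fun i i' j j' => (τ i j < τ i' j', τ i j' < τ i' j))
  have hsh : ∀ o, StrictMono (fun i => G (o + i)) := fun o a b hab => hG (by omega)
  have hα : (∀ a b c d, a < b → b < c → c < d → d < 4 * n + 4 * m + 10 →
      τ (G a) (G c) < τ (G b) (G d)) ∨ (∀ a b c d, a < b → b < c → c < d → d < 4 * n + 4 * m + 10 →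
      τ (G b) (G d) < τ (G a) (G c)) := by
    by_cases h : τ (G 0) (G 2) < τ (G 1) (G 3)
    · left
      intro a b c d h1 h2 h3 h4
      have := congrArg Prod.fst (hc 0 1 2 3 a b c d (by omega) (by omega) (by omega) (by omega)
        h1 h2 h3 h4)
      simp only [] at this
      exact this ▸ h
    · right
      intro a b c d h1 h2 h3 h4
      have := congrArg Prod.fst (hc 0 1 2 3 a b c d (by omega) (by omega) (by omega) (by omega)
        h1 h2 h3 h4)
      simp only [] at this
      rw [this] at h
      refine lt_of_le_of_ne (not_lt.1 h) (fun he => ?_)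
      have := (hτ _ (hGq _ (by omega)) _ (hGq _ (by omega)) _ (hGq _ (by omega)) _
        (hGq _ (by omega)) he).1
      have := hG.injective this
      omega
  have hβ : (∀ a b c d, a < b → b < c → c < d → d < 4 * n + 4 * m + 10 →
      τ (G a) (G d) < τ (G b) (G c)) ∨ (∀ a b c d, a < b → b < c → c < d → d < 4 * n + 4 * m + 10 →
      τ (G b) (G c) < τ (G a) (G d)) := by
    by_cases h : τ (G 0) (G 3) < τ (G 1) (G 2)
    · left
      intro a b c d h1 h2 h3 h4
      have := congrArg Prod.snd (hc 0 1 2 3 a b c d (by omega) (by omega) (by omega) (by omega)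
        h1 h2 h3 h4)
      simp only [] at this
      exact this ▸ h
    · right
      intro a b c d h1 h2 h3 h4
      have := congrArg Prod.snd (hc 0 1 2 3 a b c d (by omega) (by omega) (by omega) (by omega)
        h1 h2 h3 h4)
      simp only [] at this
      rw [this] at h
      refine lt_of_le_of_ne (not_lt.1 h) (fun he => ?_)
      have := (hτ _ (hGq _ (by omega)) _ (hGq _ (by omega)) _ (hGq _ (by omega)) _
        (hGq _ (by omega)) he).1
      have := hG.injective this
      omega
  rcases hα with hα | hα <;> rcases hβ with hβ | hβ
  · left
    refine ⟨τ (G m) (G (2 * m + 2 + n)), fun j => G (2 * m + 2 + j), fun i => G (0 + i),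
      fun i => G (m + 1 + i), hsh _, hsh _, hsh _, fun j hj => hGq _ (by omega),
      fun j hj => hGq _ (by omega), fun j hj => hGq _ (by omega), ?_, ?_⟩
    · intro i hi j hj
      exact (hα _ _ _ _ (by omega) (by omega) (by omega) (by omega)).le
    · intro i hi j hj
      exact hβ _ _ _ _ (by omega) (by omega) (by omega) (by omega)
  · right
    refine ⟨τ (G n) (G (n + 1 + m)), fun j => G (0 + j), fun i => G (n + 1 + i),
      fun i => G (n + 2 + m + i), hsh _, hsh _, hsh _, fun j hj => hGq _ (by omega),
      fun j hj => hGq _ (by omega), fun j hj => hGq _ (by omega), ?_, ?_⟩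
    · intro i hi j hj
      exact (hα _ _ _ _ (by omega) (by omega) (by omega) (by omega)).le
    · intro i hi j hj
      exact hβ _ _ _ _ (by omega) (by omega) (by omega) (by omega)
  · right
    refine ⟨τ (G n) (G (n + 1 + m)), fun j => G (0 + j), fun i => G (n + 2 + m + i),
      fun i => G (n + 1 + i), hsh _, hsh _, hsh _, fun j hj => hGq _ (by omega),
      fun j hj => hGq _ (by omega), fun j hj => hGq _ (by omega), ?_, ?_⟩
    · intro i hi j hj
      exact (hβ _ _ _ _ (by omega) (by omega) (by omega) (by omega)).le
    · intro i hi j hj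
      exact hα _ _ _ _ (by omega) (by omega) (by omega) (by omega)
  · left
    refine ⟨τ (G m) (G (2 * m + 2 + n)), fun j => G (2 * m + 2 + j), fun i => G (m + 1 + i),
      fun i => G (0 + i), hsh _, hsh _, hsh _, fun j hj => hGq _ (by omega),
      fun j hj => hGq _ (by omega), fun j hj => hGq _ (by omega), ?_, ?_⟩
    · intro i hi j hj
      exact (hβ _ _ _ _ (by omega) (by omega) (by omega) (by omega)).le
    · intro i hi j hj
      exact hα _ _ _ _ (by omega) (by omega) (by omega) (by omega)

lemma direct (s : ℕ) : ∃ m, ∀ n, ∃ n', ∀ τ : ℕ → ℕ → ℕ,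
    (∀ i < m, ∀ j < n', ∀ j' < n', τ i j = τ i j' → j = j') →
    ∃ f ρ : ℕ → ℕ, StrictMono f ∧ StrictMono ρ ∧ (∀ j < n, f j < n') ∧ (∀ i < s, ρ i < m) ∧
      ∃ dir : Bool, ∀ i < s, ∀ j j', j < n → j' < n → (bif dir then j < j' else j' < j) →
        τ (ρ i) (f j) < τ (ρ i) (f j') := by
  classical
  obtain ⟨m, hm⟩ := ramsey1 Prop s
  refine ⟨m, fun n => ?_⟩
  obtain ⟨n', hn'⟩ := ramsey2 (Fin m → Prop) (n + 2)
  refine ⟨n', fun τ hτ => ?_⟩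
  obtain ⟨f, hf, hfn, hc⟩ := hn' (fun j j' i => τ i j < τ i j')
  obtain ⟨ρ, hρ, hρm, hcρ⟩ := hm (fun i => τ i (f 0) < τ i (f 1))
  refine ⟨f, ρ, hf, hρ, fun j hj => hfn j (by omega), hρm, ?_⟩
  by_cases hs : 0 < s
  swap
  · exact ⟨true, fun i hi => by omega⟩
  by_cases h : τ (ρ 0) (f 0) < τ (ρ 0) (f 1)
  · refine ⟨true, ?_⟩
    intro i hi j j' hj hj' hjj
    have h1 : τ (ρ i) (f 0) < τ (ρ i) (f 1) := by
      have := hcρ 0 i hs hi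
      exact this ▸ h
    have h2 := congrFun (hc 0 1 j j' (by omega) (by omega) hjj (by omega)) ⟨ρ i, hρm i hi⟩
    simp only [] at h2
    exact h2 ▸ h1
  · refine ⟨false, ?_⟩
    intro i hi j j' hj hj' hjj
    have h1 : ¬ τ (ρ i) (f 0) < τ (ρ i) (f 1) := by
      have := hcρ 0 i hs hi
      exact this ▸ h
    have hjj' : j' < j := hjj
    have h2 := congrFun (hc 0 1 j' j (by omega) (by omega) hjj' (by omega)) ⟨ρ i, hρm i hi⟩
    simp only [] at h2
    rw [h2] at h1
    refine lt_of_le_of_ne (not_lt.1 h1) (fun he => ?_)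
    have := hf.injective (hτ _ (hρm i hi) _ (hfn _ (by omega)) _ (hfn _ (by omega)) he)
    omega

structure Cols {W : Type} (r : W → W → Prop) (t : W → ℕ) (N n θ : ℕ) (c d : ℕ → ℕ)
    (z zp : ℕ → W) : Prop where
  cN : ∀ j < n, c j < N
  dN : ∀ j < n, d j < N
  ci : ∀ i < n, ∀ j < n, c i = c j → i = j
  di : ∀ i < n, ∀ j < n, d i = d j → i = j
  cd : ∀ i < n, ∀ j < n, c i ≠ d j
  zr : ∀ j < n, r (z j) (zp j)
  zt : ∀ j < n, t (z j) ≤ θ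
  zpt : ∀ j < n, θ < t (zp j)

def NSd {W : Type} (r : W → W → Prop) (p q : ℕ → W) (n s : ℕ) (dir : Bool) : Prop :=
  ∀ I J : Finset ℕ, I.card = s → J.card = s → (∀ i ∈ I, i < n) → (∀ j ∈ J, j < n) →
    (∀ i ∈ I, ∀ j ∈ J, bif dir then i < j else j < i) →
    ∀ Z : Finset W, Z.card < s → ∃ i ∈ I, ∃ j ∈ J, Reach r (↑Z)ᶜ (p i) (q j)

lemma avoid {W : Type} (S : ℕ → Set W) (I : Finset ℕ)
    (hd : ∀ i ∈ I, ∀ j ∈ I, i ≠ j → Disjoint (S i) (S j)) (Z : Finset W) (hZ : Z.card < I.card) :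
    ∃ i ∈ I, S i ⊆ (↑Z)ᶜ := by
  by_contra hcon
  push Not at hcon
  have : ∀ i ∈ I, ∃ z ∈ Z, z ∈ S i := by
    intro i hi
    obtain ⟨x, hx, hxz⟩ := Set.not_subset.1 (hcon i hi)
    exact ⟨x, by simpa using hxz, hx⟩
  have hne : Nonempty W := by
    have h0 : 0 < I.card := by omega
    obtain ⟨i, hi⟩ := Finset.card_pos.1 h0
    obtain ⟨z, -, -⟩ := this i hi
    exact ⟨z⟩
  choose! f hf hfS using this
  have := Finset.card_le_card_of_injOn f hf (by
    intro i hi j hj hij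
    by_contra hne
    exact Set.disjoint_left.1 (hd i hi j hj hne) (hfS i hi) (hij ▸ hfS j hj))
  omega

lemma cutpoint {W : Type} [Finite W] {r : W → W → Prop} {t : W → ℕ} (ht : Top r t) {S : Set W}
    {a b x y : W} (h : IsPath r t S a b) (hx : x ∈ S) (hy : y ∈ S) {θ : ℕ} (hxt : t x ≤ θ)
    (hyt : θ < t y) : ∃ z zp, z ∈ S ∧ zp ∈ S ∧ t z ≤ θ ∧ θ < t zp ∧ r z zp ∧
      (∀ w ∈ S, t w ≤ θ → t w ≤ t z) ∧ (∀ w ∈ S, θ < t w → t zp ≤ t w) := by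
  obtain ⟨z, ⟨hz, hzt⟩, hzm⟩ := Set.exists_max_image (S ∩ {w | t w ≤ θ}) t (Set.toFinite _) ⟨x, hx, hxt⟩
  obtain ⟨zp, ⟨hzp, hzpt⟩, hzpm⟩ := Set.exists_min_image (S ∩ {w | θ < t w}) t (Set.toFinite _)
    ⟨y, hy, hyt⟩
  simp only [Set.mem_setOf_eq] at hzt hzpt
  refine ⟨z, zp, hz, hzp, hzt, hzpt, ?_, fun w hw hwt => hzm w ⟨hw, hwt⟩,
    fun w hw hwt => hzpm w ⟨hw, hwt⟩⟩
  have hR := h.lin z hz zp hzp (by omega)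
  obtain ⟨h1, h2⟩ := hR
  rcases ReflTransGen.cases_head h2 with h3 | ⟨w, h3, h4⟩
  · rw [h3] at hzt; omega
  · have h5 : Reach r S w zp := ⟨h3.2.2, h4⟩
    have h6 := h5.time ht
    have h7 := ht.2 _ _ h3.1
    have h8 : θ < t w := by
      by_contra hc
      have := hzm w ⟨h3.2.2, not_lt.1 hc⟩
      omega
    have h9 := hzpm w ⟨h3.2.2, h8⟩
    have : w = zp := ht.1 (by omega)
    rw [← this]; exact h3.1

lemma grid0 (s n : ℕ) (hs : 0 < s) : ∃ m n2, ∀ (q N : ℕ) (W : Type) [Finite W] (r : W → W → Prop)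
    (t : W → ℕ), Top r t → ∀ (src snk : ℕ → W) (R K : ℕ → Set W) (a b c d : ℕ → ℕ),
    Fam r t src snk R a b q N → Fam r t src snk K c d q N → ∀ w : ℕ → ℕ → W,
    (∀ i < q, ∀ j < q, w i j ∈ R i ∧ w i j ∈ K j) → Cut q (fun i j => t (w i j)) n2 m →
    ∃ θ c d z zp dm dp, Cols r t N n θ c d z zp ∧ NSd r (src ∘ c) z n s dm ∧
      NSd r zp (snk ∘ d) n s dp := by
  obtain ⟨m, hm⟩ := direct s
  obtain ⟨n1, hn1⟩ := hm n
  obtain ⟨n2, hn2⟩ := hm n1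
  refine ⟨m, n2, ?_⟩
  rintro q N W _ r t ht src snk R K a b c d ⟨hR, hRd, -, -, -⟩ ⟨hK, hKd, hcd, hcN, hdN⟩ w hw
    ⟨θ, f, ρ, ρ', hf, hρ, hρ', hfq, hρq, hρq', hlo, hhi⟩
  have hwi : ∀ i < q, ∀ j < q, ∀ j' < q, t (w i j) = t (w i j') → j = j' := by
    intro i hi j hj j' hj' h
    by_contra hne
    have := ht.1 h
    exact Set.disjoint_left.1 (hKd j hj j' hj' hne) (hw i hi j hj).2 (this ▸ (hw i hi j' hj').2)
  obtain ⟨f1, σ1, hf1, hσ1, hf1n, hσ1m, dm, hdm⟩ := hn2 (fun i j => t (w (ρ i) (f j))) (by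
    intro i hi j hj j' hj' h
    exact hf.injective (hwi _ (hρq i hi) _ (hfq j hj) _ (hfq j' hj') h))
  obtain ⟨f2, σ2, hf2, hσ2, hf2n, hσ2m, dp, hdp⟩ := hn1 (fun i j => t (w (ρ' i) (f (f1 j)))) (by
    intro i hi j hj j' hj' h
    exact hf1.injective (hf.injective
      (hwi _ (hρq' i hi) _ (hfq _ (hf1n _ hj)) _ (hfq _ (hf1n _ hj')) h)))
  set F : ℕ → ℕ := fun j => f (f1 (f2 j)) with hF
  have hFi : Function.Injective F := fun x y h => hf2.injective (hf1.injective (hf.injective h))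
  have hFq : ∀ j < n, F j < q := fun j hj => hfq _ (hf1n _ (hf2n _ hj))
  -- rows
  set A : ℕ → ℕ := fun i => ρ (σ1 i) with hA
  set B : ℕ → ℕ := fun i => ρ' (σ2 i) with hB
  have hAi : Function.Injective A := fun x y h => hσ1.injective (hρ.injective h)
  have hBi : Function.Injective B := fun x y h => hσ2.injective (hρ'.injective h)
  have hAq : ∀ i < s, A i < q := fun i hi => hρq _ (hσ1m _ hi)
  have hBq : ∀ i < s, B i < q := fun i hi => hρq' _ (hσ2m _ hi)
  have hlo' : ∀ i < s, ∀ j < n, t (w (A i) (F j)) ≤ θ :=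
    fun i hi j hj => hlo _ (hσ1m i hi) _ (hf1n _ (hf2n _ hj))
  have hhi' : ∀ i < s, ∀ j < n, θ < t (w (B i) (F j)) :=
    fun i hi j hj => hhi _ (hσ2m i hi) _ (hf1n _ (hf2n _ hj))
  have hz : ∀ j, ∃ z zp, j < n → z ∈ K (F j) ∧ zp ∈ K (F j) ∧ t z ≤ θ ∧ θ < t zp ∧ r z zp ∧
      (∀ w ∈ K (F j), t w ≤ θ → t w ≤ t z) ∧ (∀ w ∈ K (F j), θ < t w → t zp ≤ t w) := by
    intro j
    by_cases hj : j < n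
    · obtain ⟨z, zp, h⟩ := cutpoint ht (hK (F j) (hFq j hj)) (hw _ (hAq 0 hs) _ (hFq j hj)).2
        (hw _ (hBq 0 hs) _ (hFq j hj)).2 (hlo' 0 hs j hj) (hhi' 0 hs j hj)
      exact ⟨z, zp, fun _ => h⟩
    · exact ⟨src 0, src 0, fun h => absurd h hj⟩
  choose z zp hz using hz
  refine ⟨θ, c ∘ F, d ∘ F, z, zp, dm, dp, ⟨?_, ?_, ?_, ?_, ?_, ?_, ?_, ?_⟩, ?_, ?_⟩
  · intro j hj; exact hcN _ (hFq j hj)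
  · intro j hj; exact hdN _ (hFq j hj)
  · intro i hi j hj h
    by_contra hne
    refine Set.disjoint_left.1 (hKd (F i) (hFq i hi) (F j) (hFq j hj) (fun h => hne (hFi h)))
      (hK _ (hFq i hi)).ha ?_
    simp only [Function.comp_apply] at h
    rw [h]; exact (hK _ (hFq j hj)).ha
  · intro i hi j hj h
    by_contra hne
    refine Set.disjoint_left.1 (hKd (F i) (hFq i hi) (F j) (hFq j hj) (fun h => hne (hFi h)))
      (hK _ (hFq i hi)).hb ?_
    simp only [Function.comp_apply] at h
    rw [h]; exact (hK _ (hFq j hj)).hb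
  · intro i hi j hj; exact hcd _ (hFq i hi) _ (hFq j hj)
  · intro j hj; exact (hz j hj).2.2.2.2.1
  · intro j hj; exact (hz j hj).2.2.1
  · intro j hj; exact (hz j hj).2.2.2.1
  · intro I J hI hJ hIn hJn hIJ Z hZ
    obtain ⟨i, hi, hiZ⟩ := avoid (fun j => K (F j)) I (fun i hi j hj hij =>
      hKd _ (hFq i (hIn i hi)) _ (hFq j (hIn j hj)) (fun h => hij (hFi h))) Z (by omega)
    obtain ⟨j, hj, hjZ⟩ := avoid (fun j => K (F j)) J (fun i hi j hj hij =>
      hKd _ (hFq i (hJn i hi)) _ (hFq j (hJn j hj)) (fun h => hij (hFi h))) Z (by omega)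
    obtain ⟨l, hl, hlZ⟩ := avoid (fun l => R (A l)) (Finset.range s) (fun i hi j hj hij =>
      hRd _ (hAq i (Finset.mem_range.1 hi)) _ (hAq j (Finset.mem_range.1 hj))
        (fun h => hij (hAi h))) Z (by simpa using hZ)
    have hl := Finset.mem_range.1 hl
    have hin := hIn i hi
    have hjn := hJn j hj
    have hwi := hw _ (hAq l hl) _ (hFq i hin)
    have hwj := hw _ (hAq l hl) _ (hFq j hjn)
    refine ⟨i, hi, j, hj, ?_⟩
    have hlt := hdm l hl (f2 i) (f2 j) (hf2n _ hin) (hf2n _ hjn) (by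
      have := hIJ i hi j hj
      cases dm
      · exact hf2 this
      · exact hf2 this)
    exact ((((hK _ (hFq i hin)).pre hwi.2).mono hiZ).trans
      (((hR _ (hAq l hl)).lin _ hwi.1 _ hwj.1 hlt.le).mono hlZ)).trans
      (((hK _ (hFq j hjn)).lin _ hwj.2 _ (hz j hjn).1
        ((hz j hjn).2.2.2.2.2.1 _ hwj.2 (hlo' l hl j hjn))).mono hjZ)
  · intro I J hI hJ hIn hJn hIJ Z hZ
    obtain ⟨i, hi, hiZ⟩ := avoid (fun j => K (F j)) I (fun i hi j hj hij =>
      hKd _ (hFq i (hIn i hi)) _ (hFq j (hIn j hj)) (fun h => hij (hFi h))) Z (by omega)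
    obtain ⟨j, hj, hjZ⟩ := avoid (fun j => K (F j)) J (fun i hi j hj hij =>
      hKd _ (hFq i (hJn i hi)) _ (hFq j (hJn j hj)) (fun h => hij (hFi h))) Z (by omega)
    obtain ⟨l, hl, hlZ⟩ := avoid (fun l => R (B l)) (Finset.range s) (fun i hi j hj hij =>
      hRd _ (hBq i (Finset.mem_range.1 hi)) _ (hBq j (Finset.mem_range.1 hj))
        (fun h => hij (hBi h))) Z (by simpa using hZ)
    have hl := Finset.mem_range.1 hl
    have hin := hIn i hi
    have hjn := hJn j hj
    have hwi := hw _ (hBq l hl) _ (hFq i hin)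
    have hwj := hw _ (hBq l hl) _ (hFq j hjn)
    refine ⟨i, hi, j, hj, ?_⟩
    have hlt := hdp l hl i j hin hjn (hIJ i hi j hj)
    exact ((((hK _ (hFq i hin)).lin _ (hz i hin).2.1 _ hwi.2
        ((hz i hin).2.2.2.2.2.2 _ hwi.2 (hhi' l hl i hin))).mono hiZ).trans
      (((hR _ (hBq l hl)).lin _ hwi.1 _ hwj.1 hlt.le).mono hlZ)).trans
      (((hK _ (hFq j hjn)).suf hwj.2).mono hjZ)

lemma grid (s n : ℕ) (hs : 0 < s) : ∃ q, ∀ (N : ℕ) (W : Type) [Finite W] (r : W → W → Prop)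
    (t : W → ℕ), Top r t → ∀ (src snk : ℕ → W) (P Q : ℕ → Set W) (a b a' b' : ℕ → ℕ),
    Fam r t src snk P a b q N → Fam r t src snk Q a' b' q N →
    (∀ i < q, ∀ j < q, (P i ∩ Q j).Nonempty) →
    ∃ θ c d z zp dm dp, Cols r t N n θ c d z zp ∧ NSd r (src ∘ c) z n s dm ∧
      NSd r zp (snk ∘ d) n s dp := by
  obtain ⟨m, n2, h⟩ := grid0 s n hs
  obtain ⟨q, hq⟩ := cut n2 m
  refine ⟨q, ?_⟩
  intro N W _ r t ht src snk P Q a b a' b' hP hQ hPQ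
  have : ∀ i j, ∃ w, i < q → j < q → w ∈ P i ∧ w ∈ Q j := by
    intro i j
    by_cases hh : i < q ∧ j < q
    · obtain ⟨w, hw⟩ := hPQ i hh.1 j hh.2
      exact ⟨w, fun _ _ => hw⟩
    · exact ⟨src 0, fun h1 h2 => absurd ⟨h1, h2⟩ hh⟩
  choose w hw using this
  rcases hq (fun i j => t (w i j)) (by
    intro i hi j hj i' hi' j' hj' he
    have he := ht.1 he
    constructor
    · by_contra hne
      exact Set.disjoint_left.1 (hP.2.1 i hi i' hi' hne) (hw i j hi hj).1 (he ▸ (hw i' j' hi' hj').1)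
    · by_contra hne
      exact Set.disjoint_left.1 (hQ.2.1 j hj j' hj' hne) (hw i j hi hj).2
        (he ▸ (hw i' j' hi' hj').2)) with hc | hc
  · exact h q N W r t ht src snk P Q a b a' b' hP hQ w (fun i hi j hj => hw i j hi hj) hc
  · exact h q N W r t ht src snk Q P a' b' a b hQ hP (fun i j => w j i)
      (fun i hi j hj => (hw j i hj hi).symm) hc

end EPx

namespace EPx

open Relation

/-! ### Linkages in both directions -/

def Lk {W : Type} (r : W → W → Prop) (t : W → ℕ) (p q : ℕ → W) (M K : ℕ) (dir : Bool) : Prop :=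
  ∃ ε : Bool, ∀ x y : Fin K → ℕ, Tup K M x → Tup K M y →
    (∀ a b, bif dir then x a < y b else y b < x a) → Rt r t (p ∘ x) (q ∘ y) ε

lemma Lk.comp {W : Type} {r : W → W → Prop} {t : W → ℕ} {p q : ℕ → W} {M M' K : ℕ} {dir : Bool}
    (h : Lk r t p q M K dir) {g : ℕ → ℕ} (hg : StrictMono g) (hM : ∀ i < M', g i < M) :
    Lk r t (p ∘ g) (q ∘ g) M' K dir := by
  obtain ⟨ε, h⟩ := h
  refine ⟨ε, ?_⟩
  intro x y hx hy hxy
  refine h (g ∘ x) (g ∘ y) ⟨hg.comp hx.1, fun i => hM _ (hx.2 i)⟩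
    ⟨hg.comp hy.1, fun i => hM _ (hy.2 i)⟩ ?_
  intro a b
  have := hxy a b
  cases dir
  · exact hg this
  · exact hg this

lemma NSd.comp {W : Type} {r : W → W → Prop} {p q : ℕ → W} {M M' s : ℕ} {dir : Bool}
    (h : NSd r p q M s dir) {g : ℕ → ℕ} (hg : StrictMono g) (hM : ∀ i < M', g i < M) :
    NSd r (p ∘ g) (q ∘ g) M' s dir := by
  intro I J hI hJ hIM hJM hIJ Z hZ
  obtain ⟨i, hi, j, hj, hr⟩ := h (I.image g) (J.image g)
    (by rw [Finset.card_image_of_injective _ hg.injective, hI])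
    (by rw [Finset.card_image_of_injective _ hg.injective, hJ])
    (by
      intro i hi
      obtain ⟨a, ha, rfl⟩ := Finset.mem_image.1 hi
      exact hM _ (hIM _ ha))
    (by
      intro i hi
      obtain ⟨a, ha, rfl⟩ := Finset.mem_image.1 hi
      exact hM _ (hJM _ ha))
    (by
      intro i hi j hj
      obtain ⟨a, ha, rfl⟩ := Finset.mem_image.1 hi
      obtain ⟨b, hb, rfl⟩ := Finset.mem_image.1 hj
      have := hIJ a ha b hb
      cases dir
      · exact hg this
      · exact hg this) Z hZ
  obtain ⟨a, ha, rfl⟩ := Finset.mem_image.1 hi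
  obtain ⟨b, hb, rfl⟩ := Finset.mem_image.1 hj
  exact ⟨a, ha, b, hb, hr⟩

lemma Cols.comp {W : Type} {r : W → W → Prop} {t : W → ℕ} {N M M' θ : ℕ} {c d : ℕ → ℕ}
    {z zp : ℕ → W} (h : Cols r t N M θ c d z zp) {g : ℕ → ℕ} (hg : StrictMono g)
    (hM : ∀ i < M', g i < M) : Cols r t N M' θ (c ∘ g) (d ∘ g) (z ∘ g) (zp ∘ g) :=
  ⟨fun j hj => h.cN _ (hM _ hj), fun j hj => h.dN _ (hM _ hj),
    fun i hi j hj he => hg.injective (h.ci _ (hM _ hi) _ (hM _ hj) he),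
    fun i hi j hj he => hg.injective (h.di _ (hM _ hi) _ (hM _ hj) he),
    fun i hi j hj => h.cd _ (hM _ hi) _ (hM _ hj),
    fun j hj => h.zr _ (hM _ hj), fun j hj => h.zt _ (hM _ hj), fun j hj => h.zpt _ (hM _ hj)⟩

lemma MR1 (K : ℕ) : ∃ s0, ∀ s ≥ s0, ∀ M, ∃ n, ∀ (W : Type) [Finite W] (r : W → W → Prop)
    (t : W → ℕ), Top r t → ∀ (p q : ℕ → W) (dir : Bool), NSd r p q n s dir →
    ∃ g : ℕ → ℕ, StrictMono g ∧ (∀ i < M, g i < n) ∧ Lk r t (p ∘ g) (q ∘ g) M K dir := by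
  obtain ⟨s0, hs0⟩ := mengerMono K
  refine ⟨s0, fun s hs M => ?_⟩
  obtain ⟨n, hn⟩ := absMR K s M
  refine ⟨n, ?_⟩
  intro W _ r t ht p q dir h
  cases dir with
  | true =>
    obtain ⟨g, hg, hgn, ε, hF⟩ := hn (fun ε x y => Rt r t (p ∘ x) (q ∘ y) ε) (by
      intro I J hI hJ hIn hJn hIJ
      exact hs0 W r t ht p q I J (fun Z hZ => h I J hI hJ hIn hJn hIJ Z (by omega)))
    exact ⟨g, hg, hgn, ε, fun x y hx hy hxy => hF x y hx hy hxy⟩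
  | false =>
    obtain ⟨g, hg, hgn, ε, hF⟩ := hn (fun ε x y => Rt r t (p ∘ y) (q ∘ x) ε) (by
      intro I J hI hJ hIn hJn hIJ
      obtain ⟨ε, x, y, h1, h2, h3, h4, h5⟩ := hs0 W r t ht p q J I
        (fun Z hZ => h J I hJ hI hJn hIn (fun i hi j hj => hIJ j hj i hi) Z (by omega))
      exact ⟨ε, y, x, h2, h1, h4, h3, h5⟩)
    exact ⟨g, hg, hgn, ε, fun x y hx hy hxy => hF y x hy hx (fun a b => hxy b a)⟩

lemma MRall (K1 K2 : ℕ) : ∃ s, 0 < s ∧ ∀ M, ∃ n, ∀ (W : Type) [Finite W] (r : W → W → Prop)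
    (t : W → ℕ), Top r t → ∀ (p q p' q' : ℕ → W) (dm dp : Bool), NSd r p q n s dm →
    NSd r p' q' n s dp → ∃ g : ℕ → ℕ, StrictMono g ∧ (∀ i < M, g i < n) ∧
      Lk r t (p ∘ g) (q ∘ g) M K1 dm ∧ Lk r t (p ∘ g) (q ∘ g) M K2 dm ∧
      Lk r t (p' ∘ g) (q' ∘ g) M K1 dp ∧ Lk r t (p' ∘ g) (q' ∘ g) M K2 dp := by
  obtain ⟨s1, h1⟩ := MR1 K1
  obtain ⟨s2, h2⟩ := MR1 K2
  refine ⟨s1 + s2 + 1, by omega, fun M => ?_⟩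
  obtain ⟨n4, h4⟩ := h2 (s1 + s2 + 1) (by omega) M
  obtain ⟨n3, h3⟩ := h1 (s1 + s2 + 1) (by omega) n4
  obtain ⟨n2, h2⟩ := h2 (s1 + s2 + 1) (by omega) n3
  obtain ⟨n1, h1⟩ := h1 (s1 + s2 + 1) (by omega) n2
  refine ⟨n1, ?_⟩
  intro W _ r t ht p q p' q' dm dp hm hp
  obtain ⟨g1, hg1, hb1, hl1⟩ := h1 W r t ht p q dm hm
  have hm := hm.comp hg1 hb1
  have hp := hp.comp hg1 hb1
  obtain ⟨g2, hg2, hb2, hl2⟩ := h2 W r t ht _ _ dm hm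
  have hp := hp.comp hg2 hb2
  have hl1 := hl1.comp hg2 hb2
  obtain ⟨g3, hg3, hb3, hl3⟩ := h3 W r t ht _ _ dp hp
  have hp := hp.comp hg3 hb3
  have hl1 := hl1.comp hg3 hb3
  have hl2 := hl2.comp hg3 hb3
  obtain ⟨g4, hg4, hb4, hl4⟩ := h4 W r t ht _ _ dp hp
  exact ⟨g1 ∘ g2 ∘ g3 ∘ g4, hg1.comp (hg2.comp (hg3.comp hg4)),
    fun i hi => hb1 _ (hb2 _ (hb3 _ (hb4 _ hi))), hl1.comp hg4 hb4, hl2.comp hg4 hb4,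
    hl3.comp hg4 hb4, hl4⟩

lemma rv_comp (ε1 ε2 : Bool) : ∃ ε, ∀ (K : ℕ) (l : Fin K), rv ε1 (rv ε2 l) = rv ε l := by
  cases ε1 <;> cases ε2
  · exact ⟨true, fun K l => by simp [rv]⟩
  · exact ⟨false, fun K l => by simp [rv]⟩
  · exact ⟨false, fun K l => by simp [rv]⟩
  · exact ⟨true, fun K l => by simp [rv]⟩

lemma circ_of {W : Type} {r : W → W → Prop} {src snk : ℕ → W} {m k : ℕ} (e : Fin m → ℕ)
    (G : Fin m → Set W) (ε : Bool) (good : Fin m → Prop)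
    (hstep : ∀ l, good l → TransGen (fun i j => Reach r (G l) (src i) (snk j)) (e l) (e (rv ε l)))
    (hd : ∀ l l', good l → good l' → l ≠ l' → Disjoint (G l) (G l'))
    (L : Fin k → Fin m) (hLi : Function.Injective L) (hL : ∀ u, good (L u))
    (hL' : ∀ u, good (L u).rev) (hlt : ∀ u, L u < (L u).rev) : Circ r src snk k := by
  have hmono : ∀ {S T : Set W} {i j : ℕ}, S ⊆ T →
      TransGen (fun i j => Reach r S (src i) (snk j)) i j →
      TransGen (fun i j => Reach r T (src i) (snk j)) i j := by
    intro S T i j hST h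
    exact TransGen.mono (fun _ _ (q : Reach r S _ _) => Reach.mono hST q) _ _ h
  refine ⟨fun u => G (L u) ∪ G (L u).rev, ?_, ?_⟩
  · intro u v huv
    have h1 : L u ≠ L v := fun h => huv (hLi h)
    have h2 : L u ≠ (L v).rev := by
      intro h
      have h3 := hlt u
      have h4 := hlt v
      rw [h, Fin.rev_rev] at h3
      exact absurd (h3.trans h4) (lt_irrefl _)
    have h3 : (L u).rev ≠ L v := by
      intro h
      exact h2 (by rw [← h, Fin.rev_rev])
    have h4 : (L u).rev ≠ (L v).rev := fun h => h1 (Fin.rev_injective h)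
    rw [Set.disjoint_union_left, Set.disjoint_union_right, Set.disjoint_union_right]
    exact ⟨⟨hd _ _ (hL _) (hL _) h1, hd _ _ (hL _) (hL' _) h2⟩,
      hd _ _ (hL' _) (hL _) h3, hd _ _ (hL' _) (hL' _) h4⟩
  · intro u
    refine ⟨e (L u), ?_⟩
    have h1 := hmono (T := G (L u) ∪ G (L u).rev) Set.subset_union_left (hstep _ (hL u))
    have h2 := hmono (T := G (L u) ∪ G (L u).rev) Set.subset_union_right (hstep _ (hL' u))
    cases ε
    · simp only [rv, Fin.rev_rev, Bool.false_eq_true, if_false] at h1 h2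
      exact h1.trans h2
    · simpa [rv] using h1

lemma pick {β : Type} (k b : ℕ) (Bad : Fin (2 * (k + b)) → Prop) (f : Fin (2 * (k + b)) → β)
    (F : Finset β) (hF : F.card ≤ b) (hf : ∀ l, Bad l → f l ∈ F)
    (hi : ∀ l l', Bad l → Bad l' → f l = f l' → l = l') :
    ∃ L : Fin k → Fin (2 * (k + b)), Function.Injective L ∧ (∀ u, ¬ Bad (L u)) ∧
      (∀ u, ¬ Bad (L u).rev) ∧ ∀ u, L u < (L u).rev := by
  classical
  let E : Fin (k + b) → Fin (2 * (k + b)) := fun u => ⟨u, by omega⟩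
  have hElt : ∀ u, E u < (E u).rev := by
    intro u
    simp only [Fin.lt_def, Fin.val_rev, E]; omega
  let B : Finset (Fin (k + b)) := Finset.univ.filter (fun u => Bad (E u) ∨ Bad (E u).rev)
  let τ : Fin (k + b) → Fin (2 * (k + b)) := fun u => if Bad (E u) then E u else (E u).rev
  have hτ : ∀ u ∈ B, Bad (τ u) := by
    intro u hu
    simp only [B, Finset.mem_filter, Finset.mem_univ, true_and] at hu
    simp only [τ]
    split_ifs with h
    · exact h
    · exact hu.resolve_left h
  have hτi : ∀ u v, τ u = τ v → u = v := by
    intro u v h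
    simp only [τ] at h
    split_ifs at h <;> simp only [Fin.ext_iff, Fin.val_rev, E] at h ⊢ <;> omega
  have hB : B.card ≤ F.card := Finset.card_le_card_of_injOn (fun u => f (τ u))
    (fun u hu => hf _ (hτ u hu)) (fun u hu v hv h => hτi _ _ (hi _ _ (hτ u hu) (hτ v hv) h))
  have hC : k ≤ Bᶜ.card := by
    rw [Finset.card_compl, Fintype.card_fin]; omega
  obtain ⟨C, hCB, hCk⟩ := Finset.exists_subset_card_eq hC
  refine ⟨fun u => E (C.orderEmbOfFin hCk u), ?_, ?_, ?_, fun u => hElt _⟩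
  · intro u v h
    have : C.orderEmbOfFin hCk u = C.orderEmbOfFin hCk v := by
      simp only [E, Fin.ext_iff] at h
      exact Fin.ext h
    exact (C.orderEmbOfFin hCk).injective this
  · intro u h
    have := hCB (C.orderEmbOfFin_mem hCk u)
    simp only [B, Finset.mem_compl, Finset.mem_filter, Finset.mem_univ, true_and] at this
    exact this (Or.inl h)
  · intro u h
    have := hCB (C.orderEmbOfFin_mem hCk u)
    simp only [B, Finset.mem_compl, Finset.mem_filter, Finset.mem_univ, true_and] at this
    exact this (Or.inr h)

lemma two_leg {W : Type} {r : W → W → Prop} {t : W → ℕ} {src snk : ℕ → W} {k θ : ℕ}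
    {e y : Fin (2 * k) → ℕ} {z zp : ℕ → W} {ε1 ε2 : Bool} (h1 : Rt r t (src ∘ e) (z ∘ y) ε1)
    (h2 : Rt r t (zp ∘ y) (snk ∘ e) ε2) (hr : ∀ l, r (z (y l)) (zp (y l)))
    (hz : ∀ l, t (z (y l)) ≤ θ) (hzp : ∀ l, θ < t (zp (y l))) : Circ r src snk k := by
  obtain ⟨S1, hS1, hd1⟩ := h1
  obtain ⟨S2, hS2, hd2⟩ := h2
  obtain ⟨ε, hε⟩ := rv_comp ε2 ε1
  have hx : ∀ l m, Disjoint (S1 l) (S2 m) := by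
    intro l m
    refine Set.disjoint_left.2 fun w hw hw' => ?_
    have h3 := (hS1 l).hi w hw
    have h4 := (hS2 m).lo w hw'
    have h5 := hz (rv ε1 l)
    have h6 := hzp m
    simp only [Function.comp_apply] at h3 h4
    omega
  have hri : ∀ l l' : Fin (2 * k), l ≠ l' → rv ε1 l ≠ rv ε1 l' := by
    intro l l' h h'
    exact h (by rw [← rv_rv ε1 l, h', rv_rv])
  refine circ_of e (fun l => S1 l ∪ S2 (rv ε1 l)) ε (fun _ => True) ?_ ?_
    (fun u => (⟨u, by omega⟩ : Fin (2 * k))) ?_ (fun _ => trivial) (fun _ => trivial) ?_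
  · intro l _
    refine TransGen.single ?_
    have h3 := ((hS1 l).reach).mono (Set.subset_union_left (t := S2 (rv ε1 l)))
    have h4 := ((hS2 (rv ε1 l)).reach).mono (Set.subset_union_right (s := S1 l))
    rw [hε] at h4
    exact (h3.trans (Reach.single h3.mem h4.1 (hr _))).trans h4
  · intro l l' _ _ hne
    rw [Set.disjoint_union_left, Set.disjoint_union_right, Set.disjoint_union_right]
    exact ⟨⟨hd1 _ _ hne, hx _ _⟩, (hx _ _).symm, hd2 _ _ (hri _ _ hne)⟩
  · intro u v h
    simp only [Fin.ext_iff] at h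
    exact Fin.ext h
  · intro u
    simp only [Fin.lt_def, Fin.val_rev]; omega

lemma three_leg {W : Type} {r : W → W → Prop} {t : W → ℕ} {src snk : ℕ → W} {k b θ : ℕ}
    {e f y : Fin (2 * (k + b)) → ℕ} {z zp : ℕ → W} {ε1 ε2 ε3 : Bool}
    (h1 : Rt r t (src ∘ e) (z ∘ y) ε1)
    (h2 : Rt r t (zp ∘ y) (snk ∘ f) ε2) (h3 : Rt r t (src ∘ f) (snk ∘ e) ε3)
    (hr : ∀ l, r (z (y l)) (zp (y l)))
    (hz : ∀ l, t (z (y l)) ≤ θ) (hzp : ∀ l, θ < t (zp (y l))) (Z : Finset W)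
    (hZb : 3 * Z.card ≤ b) (hZ1 : ∀ l m, ¬ Reach r (↑Z)ᶜ (src (f l)) (z (y m)))
    (hZ2 : ∀ l m, ¬ Reach r (↑Z)ᶜ (zp (y l)) (snk (e m))) : Circ r src snk k := by
  classical
  obtain ⟨S1, hS1, hd1⟩ := h1
  obtain ⟨S2, hS2, hd2⟩ := h2
  obtain ⟨S3, hS3, hd3⟩ := h3
  obtain ⟨ε, hε⟩ := rv_comp ε2 ε1
  obtain ⟨ε', hε'⟩ := rv_comp ε3 ε
  have hri : ∀ (ε : Bool) (l l' : Fin (2 * (k + b))), l ≠ l' → rv ε l ≠ rv ε l' := by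
    intro ε l l' h h'
    exact h (by rw [← rv_rv ε l, h', rv_rv])
  let T : Fin 3 → Fin (2 * (k + b)) → Set W := ![S1, fun l => S2 (rv ε1 l), fun l => S3 (rv ε l)]
  have hT : ∀ i l l', l ≠ l' → Disjoint (T i l) (T i l') := by
    intro i l l' h
    fin_cases i
    · exact hd1 _ _ h
    · exact hd2 _ _ (hri _ _ _ h)
    · exact hd3 _ _ (hri _ _ _ h)
  let G : Fin (2 * (k + b)) → Set W := fun l => S1 l ∪ (S2 (rv ε1 l) ∪ S3 (rv ε l))
  have hbad : ∀ l, ∃ wi : Option (W × Fin 3), ¬ G l ⊆ (↑Z)ᶜ → ∃ w i, wi = some (w, i) ∧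
      w ∈ Z ∧ w ∈ T i l := by
    intro l
    by_cases h : G l ⊆ (↑Z)ᶜ
    · exact ⟨none, fun h' => absurd h h'⟩
    · obtain ⟨w, hw, hwZ⟩ := Set.not_subset.1 h
      have hwZ : w ∈ Z := by simpa using hwZ
      rcases hw with hw | hw | hw
      · exact ⟨some (w, 0), fun _ => ⟨w, 0, rfl, hwZ, hw⟩⟩
      · exact ⟨some (w, 1), fun _ => ⟨w, 1, rfl, hwZ, hw⟩⟩
      · exact ⟨some (w, 2), fun _ => ⟨w, 2, rfl, hwZ, hw⟩⟩
  choose wi hwi using hbad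
  obtain ⟨L, hL, hLg, hLg', hlt⟩ := pick k b (fun l => ¬ G l ⊆ (↑Z)ᶜ) wi
    ((Z ×ˢ (Finset.univ : Finset (Fin 3))).image some)
    (by
      refine Finset.card_image_le.trans ?_
      rw [Finset.card_product, Finset.card_univ, Fintype.card_fin]
      omega)
    (by
      intro l hl
      obtain ⟨w, i, h1, h2, h3⟩ := hwi l hl
      rw [h1]
      simp [h2])
    (by
      intro l l' hl hl' he
      obtain ⟨w, i, h1, h2, h3⟩ := hwi l hl
      obtain ⟨w', i', h1', h2', h3'⟩ := hwi l' hl'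
      rw [h1, h1'] at he
      simp only [Option.some.injEq, Prod.mk.injEq] at he
      obtain ⟨rfl, rfl⟩ := he
      by_contra hne
      exact Set.disjoint_left.1 (hT i l l' hne) h3 h3')
  have hx12 : ∀ l m, Disjoint (S1 l) (S2 m) := by
    intro l m
    refine Set.disjoint_left.2 fun w hw hw' => ?_
    have h3 := (hS1 l).hi w hw
    have h4 := (hS2 m).lo w hw'
    have h5 := hz (rv ε1 l)
    have h6 := hzp m
    simp only [Function.comp_apply] at h3 h4
    omega
  have hx13 : ∀ l m, S1 l ⊆ (↑Z)ᶜ → S3 m ⊆ (↑Z)ᶜ → Disjoint (S1 l) (S3 m) := by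
    intro l m hl hm
    refine Set.disjoint_left.2 fun w hw hw' => ?_
    exact hZ1 m (rv ε1 l) ((((hS3 m).pre hw').mono hm).trans (((hS1 l).suf hw).mono hl))
  have hx23 : ∀ l m, S2 l ⊆ (↑Z)ᶜ → S3 m ⊆ (↑Z)ᶜ → Disjoint (S2 l) (S3 m) := by
    intro l m hl hm
    refine Set.disjoint_left.2 fun w hw hw' => ?_
    exact hZ2 l (rv ε3 m) ((((hS2 l).pre hw).mono hl).trans (((hS3 m).suf hw').mono hm))
  refine circ_of e G ε' (fun l => G l ⊆ (↑Z)ᶜ) ?_ ?_ L hL (fun u => not_not.1 (hLg u))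
    (fun u => not_not.1 (hLg' u)) hlt
  · intro l _
    have h3 : Reach r (G l) _ _ := ((hS1 l).reach).mono Set.subset_union_left
    have h4 : Reach r (G l) _ _ := ((hS2 (rv ε1 l)).reach).mono
      (Set.subset_union_left.trans Set.subset_union_right)
    have h5 : Reach r (G l) _ _ := ((hS3 (rv ε l)).reach).mono
      (Set.subset_union_right.trans Set.subset_union_right)
    rw [hε] at h4
    rw [hε'] at h5
    exact TransGen.tail (TransGen.single ((h3.trans (Reach.single h3.mem h4.1 (hr _))).trans h4)) h5
  · intro l l' hl hl' hne
    have a1 : ∀ l, G l ⊆ (↑Z)ᶜ → S1 l ⊆ (↑Z)ᶜ := fun l h => Set.subset_union_left.trans h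
    have a2 : ∀ l, G l ⊆ (↑Z)ᶜ → S2 (rv ε1 l) ⊆ (↑Z)ᶜ :=
      fun l h => (Set.subset_union_left.trans Set.subset_union_right).trans h
    have a3 : ∀ l, G l ⊆ (↑Z)ᶜ → S3 (rv ε l) ⊆ (↑Z)ᶜ :=
      fun l h => (Set.subset_union_right.trans Set.subset_union_right).trans h
    simp only [G, Set.disjoint_union_left, Set.disjoint_union_right]
    exact ⟨⟨hd1 _ _ hne, (hx12 _ _).symm, (hx13 _ _ (a1 _ hl') (a3 _ hl)).symm⟩,
      ⟨hx12 _ _, hd2 _ _ (hri _ _ _ hne), (hx23 _ _ (a2 _ hl') (a3 _ hl)).symm⟩,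
      hx13 _ _ (a1 _ hl) (a3 _ hl'), hx23 _ _ (a2 _ hl) (a3 _ hl'), hd3 _ _ (hri _ _ _ hne)⟩

theorem thmB (k r0 : ℕ) : ∃ N, ∀ (W : Type) [Finite W] (r : W → W → Prop) (t : W → ℕ),
    Top r t → ∀ src snk : ℕ → W, NS r src snk N r0 → Circ r src snk k := by
  classical
  obtain ⟨s', hs'⟩ := mengerMono (2 * k)
  obtain ⟨N2, hN2⟩ := mengerMono (2 * (k + 6 * s'))
  obtain ⟨s, hs, hMR⟩ := MRall (2 * k) (2 * (k + 6 * s'))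
  set K2 := 2 * (k + 6 * s') with hK2
  obtain ⟨L, hL⟩ : ∃ L, L = r0 + N2 + K2 := ⟨_, rfl⟩
  obtain ⟨n, hn⟩ := hMR (3 * L)
  obtain ⟨q, hq⟩ := grid s n hs
  obtain ⟨N, hN⟩ := step1 k q r0
  refine ⟨N, ?_⟩
  intro W _ r t ht src snk hNS
  rcases hN W r t ht src snk hNS with h | ⟨P, Q, a, b, a', b', hP, hQ, hPQ⟩
  · exact h
  obtain ⟨θ, c, d, z, zp, dm, dp, hC, hm, hp⟩ := hq N W r t ht src snk P Q a b a' b' hP hQ hPQ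
  obtain ⟨g, hg, hgn, hm1, hm2, hp1, hp2⟩ := hn W r t ht _ _ _ _ dm dp hm hp
  have hC := hC.comp hg hgn
  change Lk r t (src ∘ (c ∘ g)) (z ∘ g) _ _ _ at hm1
  change Lk r t (src ∘ (c ∘ g)) (z ∘ g) _ _ _ at hm2
  change Lk r t (zp ∘ g) (snk ∘ (d ∘ g)) _ _ _ at hp1
  change Lk r t (zp ∘ g) (snk ∘ (d ∘ g)) _ _ _ at hp2
  clear hm hp hP hQ hPQ hq hN hn hMR
  generalize c ∘ g = c at *
  generalize d ∘ g = d at *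
  generalize z ∘ g = z at *
  generalize zp ∘ g = zp at *
  obtain ⟨v0, hv0⟩ : ∃ v0, v0 = if dm then 0 else 2 * L := ⟨_, rfl⟩
  obtain ⟨u0, hu0⟩ : ∃ u0, u0 = if dp then 2 * L else 0 := ⟨_, rfl⟩
  set Vb : Finset ℕ := Finset.Ico v0 (v0 + L) with hVb
  set Ub : Finset ℕ := Finset.Ico u0 (u0 + L) with hUb
  set Mb : Finset ℕ := Finset.Ico L (2 * L) with hMb
  have hVlt : ∀ i ∈ Vb, i < 3 * L := by
    intro i hi
    rw [hVb, Finset.mem_Ico] at hi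
    split_ifs at hv0 <;> omega
  have hUlt : ∀ i ∈ Ub, i < 3 * L := by
    intro i hi
    rw [hUb, Finset.mem_Ico] at hi
    split_ifs at hu0 <;> omega
  have hMlt : ∀ i ∈ Mb, i < 3 * L := by
    intro i hi
    rw [hMb, Finset.mem_Ico] at hi
    omega
  have hVM : ∀ i ∈ Vb, ∀ j ∈ Mb, bif dm then i < j else j < i := by
    intro i hi j hj
    rw [hVb, Finset.mem_Ico] at hi
    rw [hMb, Finset.mem_Ico] at hj
    cases dm <;> simp at hv0 ⊢ <;> omega
  have hMU : ∀ i ∈ Mb, ∀ j ∈ Ub, bif dp then i < j else j < i := by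
    intro i hi j hj
    rw [hUb, Finset.mem_Ico] at hj
    rw [hMb, Finset.mem_Ico] at hi
    cases dp <;> simp at hu0 ⊢ <;> omega
  -- case (i)
  by_cases hi : ∀ Z : Finset W, Z.card < s' → ∃ i ∈ (↑Ub : Set ℕ), ∃ j ∈ (↑Mb : Set ℕ),
      Reach r (↑Z)ᶜ ((src ∘ d) i) (z j)
  · obtain ⟨ε1, x, y, hx, hy, hxU, hyM, hR⟩ := hs' W r t ht (src ∘ d) z Ub Mb hi
    obtain ⟨ε2, hR2⟩ := hp1
    have hR2 := hR2 y x ⟨hy, fun i => hMlt _ (hyM i)⟩ ⟨hx, fun i => hUlt _ (hxU i)⟩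
      (fun a b => hMU _ (hyM a) _ (hxU b))
    exact two_leg (e := d ∘ x) hR hR2 (fun l => hC.zr _ (hMlt _ (hyM l)))
      (fun l => hC.zt _ (hMlt _ (hyM l))) (fun l => hC.zpt _ (hMlt _ (hyM l)))
  by_cases hii : ∀ Z : Finset W, Z.card < s' → ∃ i ∈ (↑Mb : Set ℕ), ∃ j ∈ (↑Vb : Set ℕ),
      Reach r (↑Z)ᶜ (zp i) ((snk ∘ c) j)
  · obtain ⟨ε1, x, y, hx, hy, hxM, hyV, hR⟩ := hs' W r t ht zp (snk ∘ c) Mb Vb hii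
    obtain ⟨ε2, hR2⟩ := hm1
    have hR2 := hR2 y x ⟨hy, fun i => hVlt _ (hyV i)⟩ ⟨hx, fun i => hMlt _ (hxM i)⟩
      (fun a b => hVM _ (hyV a) _ (hxM b))
    exact two_leg (e := c ∘ y) hR2 hR (fun l => hC.zr _ (hMlt _ (hxM l)))
      (fun l => hC.zt _ (hMlt _ (hxM l))) (fun l => hC.zpt _ (hMlt _ (hxM l)))
  push Not at hi hii
  obtain ⟨Z1, hZ1, hZ1'⟩ := hi
  obtain ⟨Z2, hZ2, hZ2'⟩ := hii
  obtain ⟨ε3, x, v, hx, hv, hxU, hvV, hR3⟩ := hN2 W r t ht (src ∘ d) (snk ∘ c) Ub Vb (by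
    intro Z hZ
    obtain ⟨i, hi, j, hj, hR⟩ := hNS L (by omega) (Ub.image d) (Vb.image c)
      (by
        intro i hi
        obtain ⟨a, ha, rfl⟩ := Finset.mem_image.1 hi
        exact hC.dN _ (hUlt _ ha))
      (by
        intro i hi
        obtain ⟨a, ha, rfl⟩ := Finset.mem_image.1 hi
        exact hC.cN _ (hVlt _ ha))
      (by
        rw [Finset.disjoint_left]
        intro i hi hi'
        obtain ⟨a, ha, rfl⟩ := Finset.mem_image.1 hi
        obtain ⟨b, hb, hab⟩ := Finset.mem_image.1 hi'
        exact hC.cd _ (hVlt _ hb) _ (hUlt _ ha) hab)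
      (by
        rw [Finset.card_image_of_injOn, hUb, Nat.card_Ico]
        · omega
        · intro i hi j hj h; exact hC.di _ (hUlt _ hi) _ (hUlt _ hj) h)
      (by
        rw [Finset.card_image_of_injOn, hVb, Nat.card_Ico]
        · omega
        · intro i hi j hj h; exact hC.ci _ (hVlt _ hi) _ (hVlt _ hj) h) Z (by omega)
    obtain ⟨a, ha, rfl⟩ := Finset.mem_image.1 hi
    obtain ⟨b, hb, rfl⟩ := Finset.mem_image.1 hj
    exact ⟨a, ha, b, hb, hR⟩)
  let y : Fin K2 → ℕ := fun l => L + l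
  have hyM : ∀ l, y l ∈ Mb := by
    intro l
    rw [hMb, Finset.mem_Ico]
    have := l.2
    simp only [y]
    omega
  have hy : StrictMono y := by
    intro i j hij
    have : (i : ℕ) < j := hij
    simp only [y]; omega
  obtain ⟨ε1, hR1⟩ := hm2
  obtain ⟨ε2, hR2⟩ := hp2
  have hR1 := hR1 v y ⟨hv, fun i => hVlt _ (hvV i)⟩ ⟨hy, fun i => hMlt _ (hyM i)⟩
    (fun a b => hVM _ (hvV a) _ (hyM b))
  have hR2 := hR2 y x ⟨hy, fun i => hMlt _ (hyM i)⟩ ⟨hx, fun i => hUlt _ (hxU i)⟩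
    (fun a b => hMU _ (hyM a) _ (hxU b))
  have hsub1 : (↑(Z1 ∪ Z2) : Set W)ᶜ ⊆ (↑Z1)ᶜ := by
    intro w hw hw'; exact hw (by simp at hw' ⊢; exact Or.inl hw')
  have hsub2 : (↑(Z1 ∪ Z2) : Set W)ᶜ ⊆ (↑Z2)ᶜ := by
    intro w hw hw'; exact hw (by simp at hw' ⊢; exact Or.inr hw')
  refine three_leg (b := 6 * s') (θ := θ) (e := c ∘ v) (f := d ∘ x) (y := y) hR1 hR2 hR3
    (fun l => hC.zr _ (hMlt _ (hyM l)))
    (fun l => hC.zt _ (hMlt _ (hyM l))) (fun l => hC.zpt _ (hMlt _ (hyM l))) (Z1 ∪ Z2) ?_ ?_ ?_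
  · have := Finset.card_union_le Z1 Z2
    omega
  · intro l m h
    exact hZ1' _ (hxU l) _ (hyM m) (h.mono hsub1)
  · intro l m h
    exact hZ2' _ (hyM l) _ (hvV m) (h.mono hsub2)

end EPx

namespace EPx

open Relation

/-! ### Vertex version -/

lemma topo {W : Type} [Finite W] (r : W → W → Prop) (h : ∀ v, ¬ TransGen r v v) :
    ∃ t, Top r t := by
  classical
  have hanti : ∀ a b, ReflTransGen r a b → ReflTransGen r b a → a = b := by
    intro a b hab hba
    rcases reflTransGen_iff_eq_or_transGen.1 hab with h1 | h1
    · exact h1.symm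
    · exact absurd (h1.trans_left hba) (h a)
  have hpo : IsPartialOrder W (ReflTransGen r) :=
    { refl := fun a => ReflTransGen.refl
      trans := fun a b c h1 h2 => h1.trans h2
      antisymm := hanti }
  obtain ⟨s, hs, hrs⟩ := extend_partialOrder (ReflTransGen r)
  have hstr : ∀ u v, s u v → u ≠ v → Set.ncard {x | s x u} < Set.ncard {x | s x v} := by
    intro u v huv hne
    refine Set.ncard_lt_ncard ⟨fun x hx => ?_, fun hsub => ?_⟩ (Set.toFinite _)
    · exact hs.trans _ _ _ hx huv
    · have h1 : s v u := hsub (hs.refl v)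
      exact hne (hs.antisymm _ _ huv h1)
  refine ⟨fun v => Set.ncard {x | s x v}, ?_, ?_⟩
  · intro u v huv
    by_contra hne
    simp only at huv
    rcases hs.total u v with h1 | h1
    · have := hstr u v h1 hne; omega
    · have := hstr v u h1 (Ne.symm hne); omega
  · intro u v huv
    refine hstr u v (hrs _ _ (ReflTransGen.single huv)) ?_
    rintro rfl
    exact h _ (TransGen.single huv)

lemma cyc_split {V : Type} {r : V → V → Prop} {Y U : Set V} (h : Cyc r Y)
    (hU : ∀ u ∈ Y, u ∈ U → ∀ v ∈ Y, r u v → v ∈ U) : Cyc r (Y ∩ U) ∨ Cyc r (Y \ U) := by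
  obtain ⟨v, hv⟩ := h
  by_cases hvU : v ∈ U
  · left
    refine ⟨v, ?_⟩
    have key : ∀ w, TransGen (RS r Y) v w → w ∈ U ∧ TransGen (RS r (Y ∩ U)) v w := by
      intro w hw
      induction hw with
      | single h1 =>
        have h2 := hU _ h1.2.1 hvU _ h1.2.2 h1.1
        exact ⟨h2, TransGen.single ⟨h1.1, ⟨h1.2.1, hvU⟩, h1.2.2, h2⟩⟩
      | tail h0 h1 ih =>
        have h2 := hU _ h1.2.1 ih.1 _ h1.2.2 h1.1
        exact ⟨h2, ih.2.tail ⟨h1.1, ⟨h1.2.1, ih.1⟩, h1.2.2, h2⟩⟩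
    exact (key v hv).2
  · right
    refine ⟨v, ?_⟩
    have key : ∀ w, TransGen (RS r Y) w v → w ∉ U ∧ TransGen (RS r (Y \ U)) w v := by
      intro w hw
      induction hw using TransGen.head_induction_on with
      | single h1 =>
        have h2 := fun hw => hvU (hU _ h1.2.1 hw _ h1.2.2 h1.1)
        exact ⟨h2, TransGen.single ⟨h1.1, ⟨h1.2.1, h2⟩, h1.2.2, hvU⟩⟩
      | head h1 h0 ih =>
        have h2 := fun hw => ih.1 (hU _ h1.2.1 hw _ h1.2.2 h1.1)
        exact ⟨h2, ih.2.head ⟨h1.1, ⟨h1.2.1, h2⟩, h1.2.2, ih.1⟩⟩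
    exact (key v hv).2

def Pack {V : Type} (r : V → V → Prop) (k : ℕ) (X : Set V) : Prop :=
  ∃ S : Fin k → Set V, (∀ i j, i ≠ j → Disjoint (S i) (S j)) ∧ ∀ i, S i ⊆ X ∧ Cyc r (S i)

lemma Pack.add {V : Type} {r : V → V → Prop} {k : ℕ} {X Y : Set V} (h : Pack r k X)
    (hY : Cyc r Y) (hd : Disjoint X Y) : Pack r (k + 1) Set.univ := by
  obtain ⟨S, hS, hC⟩ := h
  refine ⟨Fin.cons Y S, ?_, ?_⟩
  · intro i j
    induction i using Fin.cases with
    | zero =>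
      induction j using Fin.cases with
      | zero => intro h; exact absurd rfl h
      | succ j =>
        intro _
        simp only [Fin.cons_zero, Fin.cons_succ]
        exact (hd.mono_left (hC j).1).symm
    | succ i =>
      induction j using Fin.cases with
      | zero =>
        intro _
        simp only [Fin.cons_zero, Fin.cons_succ]
        exact hd.mono_left (hC i).1
      | succ j =>
        intro h
        simp only [Fin.cons_succ]
        exact hS i j (fun h' => h (by rw [h']))
  · intro i
    refine Fin.cases ?_ (fun i => ?_) i
    · exact ⟨Set.subset_univ _, by simpa using hY⟩
    · exact ⟨Set.subset_univ _, by simpa using (hC i).2⟩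

lemma cyc_RS {V : Type} {r : V → V → Prop} {X S : Set V} : Cyc (RS r X) S ↔ Cyc r (X ∩ S) := by
  have : RS (RS r X) S = RS r (X ∩ S) := by
    funext u v
    simp only [RS, Set.mem_inter_iff, eq_iff_iff]
    tauto
  simp only [Cyc, this]

/-- the split graph -/
def HG {V : Type} (r : V → V → Prop) (T : Finset V) : V ⊕ V → V ⊕ V → Prop
  | Sum.inl u, Sum.inl v => r u v ∧ v ∉ T
  | Sum.inl u, Sum.inr v => r u v ∧ v ∈ T
  | _, _ => False

lemma HG_acyc {V : Type} {r : V → V → Prop} {T : Finset V} (hT : ¬ Cyc r (↑T)ᶜ) (w : V ⊕ V) :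
    ¬ TransGen (HG r T) w w := by
  intro h
  rcases w with u | u
  swap
  · obtain ⟨b, h1, -⟩ := TransGen.head'_iff.1 h
    rcases b with b | b <;> exact h1
  have hu : u ∉ T := by
    obtain ⟨b, -, h1⟩ := TransGen.tail'_iff.1 h
    rcases b with b | b
    · exact h1.2
    · exact absurd h1 (by simp [HG])
  have key : ∀ b, TransGen (HG r T) (Sum.inl u) b → ∀ v, b = Sum.inl v →
      v ∉ T ∧ TransGen (RS r (↑T)ᶜ) u v := by
    intro b hb
    induction hb with
    | single h1 =>
      rintro v rfl
      exact ⟨h1.2, TransGen.single ⟨h1.1, hu, h1.2⟩⟩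
    | @tail b c h0 h1 ih =>
      rintro v rfl
      rcases b with b | b
      · have := ih b rfl
        exact ⟨h1.2, this.2.tail ⟨h1.1, this.1, h1.2⟩⟩
      · exact absurd h1 (by simp [HG])
  exact hT ⟨u, (key _ h u rfl).2⟩

lemma circ_back {V : Type} {r : V → V → Prop} {T : Finset V} {en : ℕ → V} (hen : ∀ i, en i ∈ T)
    {k : ℕ} (h : Circ (HG r T) (fun i => Sum.inl (en i)) (fun i => Sum.inr (en i)) k) :
    Pack r k Set.univ := by
  obtain ⟨S, hd, hS⟩ := h
  refine ⟨fun u => {v | (v ∉ T ∧ Sum.inl v ∈ S u) ∨ (v ∈ T ∧ Sum.inl v ∈ S u ∧ Sum.inr v ∈ S u)},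
    ?_, ?_⟩
  · intro i j hij
    refine Set.disjoint_left.2 ?_
    intro v hv hv'
    have h1 : Sum.inl v ∈ S i := by rcases hv with h | h; exacts [h.2, h.2.1]
    have h2 : Sum.inl v ∈ S j := by rcases hv' with h | h; exacts [h.2, h.2.1]
    exact Set.disjoint_left.1 (hd i j hij) h1 h2
  · intro u
    refine ⟨Set.subset_univ _, ?_⟩
    obtain ⟨i, hi⟩ := hS u
    set S' : Set V := {v | (v ∉ T ∧ Sum.inl v ∈ S u) ∨
      (v ∈ T ∧ Sum.inl v ∈ S u ∧ Sum.inr v ∈ S u)} with hS'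
    have hout : Sum.inl (en i) ∈ S u := by
      obtain ⟨b, h1, -⟩ := TransGen.head'_iff.1 hi
      exact h1.1
    have hin : Sum.inr (en i) ∈ S u := by
      obtain ⟨b, -, h1⟩ := TransGen.tail'_iff.1 hi
      exact h1.mem
    have hiS : en i ∈ S' := Or.inr ⟨hen i, hout, hin⟩
    have hseg : ∀ a b, a ∈ S' → b ∈ S' → b ∈ T → Reach (HG r T) (S u) (Sum.inl a) (Sum.inr b) →
        TransGen (RS r S') a b := by
      intro a b ha hb hbT h
      have := h.ind (fun w => (∀ v, w = Sum.inl v → v ∈ S' ∧ ReflTransGen (RS r S') a v) ∧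
        (∀ v, w = Sum.inr v → v ∈ S' → TransGen (RS r S') a v)) ?_ ?_
      · exact this.2 b rfl hb
      · refine ⟨?_, ?_⟩
        · intro v hv
          have : a = v := by simpa using hv
          subst this
          exact ⟨ha, ReflTransGen.refl⟩
        · intro v hv; simp at hv
      · intro x y hx hy hxy ih
        rcases x with x | x
        swap
        · exact absurd hxy (by simp [HG])
        have ih := ih.1 x rfl
        refine ⟨?_, ?_⟩
        · rintro v rfl
          have hv : v ∈ S' := Or.inl ⟨hxy.2, hy⟩
          exact ⟨hv, ih.2.tail ⟨hxy.1, ih.1, hv⟩⟩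
        · rintro v rfl hv
          exact TransGen.tail' ih.2 ⟨hxy.1, ih.1, hv⟩
    have key : ∀ j, TransGen (fun i j => Reach (HG r T) (S u) (Sum.inl (en i)) (Sum.inr (en j))) i j →
        Sum.inl (en j) ∈ S u → en j ∈ S' ∧ TransGen (RS r S') (en i) (en j) := by
      intro j hj
      induction hj with
      | @single b h1 =>
        intro hb
        have hbS : en b ∈ S' := Or.inr ⟨hen b, hb, h1.mem⟩
        exact ⟨hbS, hseg _ _ hiS hbS (hen _) h1⟩
      | @tail b c h0 h1 ih =>
        intro hc
        have h2 := ih h1.1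
        have hcS : en c ∈ S' := Or.inr ⟨hen c, hc, h1.mem⟩
        exact ⟨hcS, h2.2.trans (hseg _ _ h2.1 hcS (hen _) h1)⟩
    exact ⟨en i, (key i hi hout).2⟩

lemma ns_of_min {V : Type} {r : V → V → Prop} {T : Finset V} {en : ℕ → V}
    {k t' N : ℕ} (IH : ∀ X : Set V, Pack r k X ∨ ∃ Z : Finset V, Z.card ≤ t' ∧ ¬ Cyc r (X \ ↑Z))
    (hno : ¬ Pack r (k + 1) Set.univ) (hT : ¬ Cyc r (↑T)ᶜ)
    (hmin : ∀ Z : Finset V, ¬ Cyc r (↑Z)ᶜ → T.card ≤ Z.card)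
    (hen : ∀ i, en i ∈ T) (heni : ∀ i < N, ∀ j < N, en i = en j → i = j) :
    NS (HG r T) (fun i => Sum.inl (en i)) (fun i => Sum.inr (en i)) N (2 * t' + 1) := by
  classical
  intro n hn I J hI hJ hIJ hIn hJn X hX
  by_contra hcon
  push Not at hcon
  set A := I.image en with hA
  set B := J.image en with hB
  have hAc : A.card = n := by
    rw [hA, Finset.card_image_of_injOn, hIn]
    intro i hi j hj h; exact heni _ (hI _ hi) _ (hI _ hj) h
  have hBc : B.card = n := by
    rw [hB, Finset.card_image_of_injOn, hJn]
    intro i hi j hj h; exact heni _ (hJ _ hi) _ (hJ _ hj) h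
  have hAT : A ⊆ T := by
    intro v hv
    obtain ⟨a, ha, rfl⟩ := Finset.mem_image.1 hv
    exact hen a
  have hBT : B ⊆ T := by
    intro v hv
    obtain ⟨a, ha, rfl⟩ := Finset.mem_image.1 hv
    exact hen a
  have hAB : Disjoint A B := by
    rw [Finset.disjoint_left]
    intro v hv hv'
    obtain ⟨a, ha, rfl⟩ := Finset.mem_image.1 hv
    obtain ⟨b, hb, hab⟩ := Finset.mem_image.1 hv'
    have := heni _ (hJ _ hb) _ (hI _ ha) hab
    subst this
    exact Finset.disjoint_left.1 hIJ ha hb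
  have hcon' : ∀ a ∈ A, ∀ b ∈ B, ¬ Reach (HG r T) (↑X)ᶜ (Sum.inl a) (Sum.inr b) := by
    intro a ha b hb
    obtain ⟨i, hi, rfl⟩ := Finset.mem_image.1 ha
    obtain ⟨j, hj, rfl⟩ := Finset.mem_image.1 hb
    exact hcon i hi j hj
  set pX : Finset V := X.image (Sum.elim id id) with hpX
  have hpl : ∀ v, v ∉ pX → Sum.inl v ∉ X := by
    intro v hv h
    exact hv (Finset.mem_image.2 ⟨_, h, rfl⟩)
  have hpr : ∀ v, v ∉ pX → Sum.inr v ∉ X := by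
    intro v hv h
    exact hv (Finset.mem_image.2 ⟨_, h, rfl⟩)
  have hpc : pX.card ≤ X.card := Finset.card_image_le
  set T' := (T \ (A ∪ B)) ∪ pX with hT'
  have hT'c : T'.card + n + 1 ≤ T.card := by
    have h1 := Finset.card_union_le (T \ (A ∪ B)) pX
    have h2 := Finset.card_sdiff_add_card_eq_card (Finset.union_subset hAT hBT)
    have h3 := Finset.card_union_of_disjoint hAB
    rw [← hT'] at h1
    omega
  have hT'm : ∀ v, v ∉ T' → v ∉ pX ∧ (v ∈ T → v ∈ A ∨ v ∈ B) := by
    intro v hv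
    rw [hT', Finset.mem_union, not_or, Finset.mem_sdiff, Finset.mem_union] at hv
    exact ⟨hv.2, fun h => by by_contra hc; exact hv.1 ⟨h, hc⟩⟩
  set U : Set V := {v | v ∉ T' ∧ (v ∈ A ∨ (v ∉ T ∧ ∃ a ∈ A,
    Reach (HG r T) (↑X)ᶜ (Sum.inl a) (Sum.inl v)))} with hU
  set U2 : Set V := {v | v ∉ T' ∧ v ∉ U} with hU2
  have hUR : ∀ u ∈ U, ∃ a ∈ A, Reach (HG r T) (↑X)ᶜ (Sum.inl a) (Sum.inl u) := by
    rintro u ⟨h1, h2 | h2⟩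
    · exact ⟨u, h2, Reach.refl (by simpa using hpl u (hT'm u h1).1)⟩
    · exact h2.2
  have hedge : ∀ u ∈ U, ∀ v, v ∉ T' → r u v → v ∈ U := by
    intro u hu v hv huv
    obtain ⟨a, ha, hR⟩ := hUR u hu
    refine ⟨hv, ?_⟩
    by_cases hvT : v ∈ T
    · rcases (hT'm v hv).2 hvT with h | h
      · exact Or.inl h
      · refine absurd (hR.trans (Reach.single hR.mem ?_ ?_)) (hcon' a ha v h)
        · simpa using hpr v (hT'm v hv).1
        · exact ⟨huv, hvT⟩
    · refine Or.inr ⟨hvT, a, ha, hR.trans (Reach.single hR.mem ?_ ?_)⟩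
      · simpa using hpl v (hT'm v hv).1
      · exact ⟨huv, hvT⟩
  have hhit : ∀ Z1 Z2 : Finset V, ¬ Cyc r (U \ ↑Z1) → ¬ Cyc r (U2 \ ↑Z2) →
      n + 1 ≤ Z1.card + Z2.card := by
    intro Z1 Z2 h1 h2
    have h3 : T.card ≤ (T' ∪ (Z1 ∪ Z2)).card := by
      apply hmin
      intro hc
      have hmem : ∀ v ∈ ((↑(T' ∪ (Z1 ∪ Z2)) : Set V)ᶜ), v ∉ T' ∧ v ∉ Z1 ∧ v ∉ Z2 := by
        intro v hv
        simpa [not_or] using hv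
      rcases cyc_split (U := U) hc (fun u hu huU v hv huv => hedge u huU v (hmem v hv).1 huv) with
        h | h
      · exact h1 (h.mono (fun v hv => ⟨hv.2, fun h => (hmem v hv.1).2.1 h⟩))
      · exact h2 (h.mono (fun v hv => ⟨⟨(hmem v hv.1).1, hv.2⟩, fun h => (hmem v hv.1).2.2 h⟩))
    have h4 := Finset.card_union_le T' (Z1 ∪ Z2)
    have h5 := Finset.card_union_le Z1 Z2
    omega
  have hAh : ¬ Cyc r (U \ ↑A) := by
    intro h
    refine hT (h.mono ?_)
    rintro v ⟨⟨h1, h2⟩, h3⟩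
    rcases h2 with h2 | h2
    · exact absurd h2 h3
    · exact h2.1
  have hBh : ¬ Cyc r (U2 \ ↑B) := by
    intro h
    refine hT (h.mono ?_)
    rintro v ⟨⟨h1, h2⟩, h3⟩ h4
    rcases (hT'm v h1).2 h4 with h5 | h5
    · exact h2 ⟨h1, Or.inl h5⟩
    · exact h3 h5
  have hc1 : Cyc r U := by
    by_contra h
    have := hhit ∅ B (by simpa using h) hBh
    simp at this; omega
  have hc2 : Cyc r U2 := by
    by_contra h
    have := hhit A ∅ hAh (by simpa using h)
    simp at this; omega
  have hdis : Disjoint U U2 := Set.disjoint_left.2 fun v h1 h2 => h2.2 h1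
  obtain ⟨Z1, hZ1, hZ1'⟩ := (IH U).resolve_left (fun h => hno (h.add hc2 hdis))
  obtain ⟨Z2, hZ2, hZ2'⟩ := (IH U2).resolve_left (fun h => hno (h.add hc1 hdis.symm))
  have := hhit Z1 Z2 hZ1' hZ2'
  omega

theorem VEP (k : ℕ) : ∃ t, ∀ (V : Type) [Finite V] (r : V → V → Prop),
    Pack r k Set.univ ∨ ∃ Z : Finset V, Z.card ≤ t ∧ ¬ Cyc r (↑Z)ᶜ := by
  classical
  induction k with
  | zero => exact ⟨0, fun V _ r => Or.inl ⟨fun i => i.elim0, fun i => i.elim0, fun i => i.elim0⟩⟩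
  | succ k ih =>
    obtain ⟨t', ht'⟩ := ih
    obtain ⟨N, hN⟩ := thmB (k + 1) (2 * t' + 1)
    refine ⟨N, ?_⟩
    intro V _ r
    by_contra hcon
    push Not at hcon
    obtain ⟨hno, hcon⟩ := hcon
    have := Fintype.ofFinite V
    have hex : ∃ n, ∃ Z : Finset V, Z.card = n ∧ ¬ Cyc r (↑Z)ᶜ := by
      refine ⟨_, Finset.univ, rfl, ?_⟩
      rintro ⟨v, hv⟩
      obtain ⟨b, h1, -⟩ := TransGen.head'_iff.1 hv
      exact h1.2.1 (by simp)
    obtain ⟨T, hTc, hT⟩ := Nat.find_spec hex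
    have hmin : ∀ Z : Finset V, ¬ Cyc r (↑Z)ᶜ → T.card ≤ Z.card := by
      intro Z hZ
      rw [hTc]
      exact Nat.find_min' hex ⟨Z, rfl, hZ⟩
    have hTN : N < T.card := by
      by_contra h
      exact hT (hcon T (not_lt.1 h))
    let en : ℕ → V := fun i => if h : i < T.card then (T.equivFin.symm ⟨i, h⟩ : V)
      else (T.equivFin.symm ⟨0, by omega⟩ : V)
    have hen : ∀ i, en i ∈ T := by
      intro i
      simp only [en]
      split_ifs
      · exact (T.equivFin.symm _).2
      · exact (T.equivFin.symm _).2
    have heni : ∀ i < N, ∀ j < N, en i = en j → i = j := by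
      intro i hi j hj h
      have h1 : i < T.card := by omega
      have h2 : j < T.card := by omega
      simp only [en, h1, h2, dif_pos] at h
      have := T.equivFin.symm.injective (Subtype.ext h)
      simpa using this
    obtain ⟨t, ht⟩ := topo (HG r T) (HG_acyc hT)
    refine hno (circ_back hen (hN (V ⊕ V) (HG r T) t ht _ _ ?_))
    refine ns_of_min (k := k) ?_ hno hT hmin hen heni
    intro X
    rcases ht' V (RS r X) with ⟨S, hS, hC⟩ | ⟨Z, hZ, hZ'⟩
    · left
      refine ⟨fun i => X ∩ S i, ?_, ?_⟩
      · intro i j hij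
        exact (hS i j hij).mono Set.inter_subset_right Set.inter_subset_right
      · intro i
        exact ⟨Set.inter_subset_left, cyc_RS.1 (hC i).2⟩
    · right
      refine ⟨Z, hZ, ?_⟩
      rw [cyc_RS] at hZ'
      exact hZ'

end EPx

namespace EPx

open Relation

/-! ### From closed walks to directed cycles and back -/

lemma walk_of {V : Type} {q : V → V → Prop} {a b : V} (h : TransGen q a b) :
    ∃ (n : ℕ) (f : ℕ → V), 1 ≤ n ∧ f 0 = a ∧ f n = b ∧ ∀ i < n, q (f i) (f (i + 1)) := by
  induction h with
  | @single b h =>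
    refine ⟨1, fun i => if i = 0 then a else b, le_rfl, by simp, by simp, ?_⟩
    intro i hi
    have : i = 0 := by omega
    subst this
    simpa using h
  | @tail b c h0 h ih =>
    obtain ⟨n, f, hn, h1, h2, h3⟩ := ih
    refine ⟨n + 1, fun i => if i ≤ n then f i else c, by omega, by simpa using h1, by simp, ?_⟩
    intro i hi
    by_cases hin : i < n
    · have h4 : i ≤ n := hin.le
      have h5 : i + 1 ≤ n := hin
      simp only [h4, h5, if_true]
      exact h3 i hin
    · have : i = n := by omega
      subst this
      simpa [h2] using h

lemma dicycle_of {V : Type} {q : V → V → Prop} (hq : ∀ v, ¬ q v v) {v : V} (h : TransGen q v v) :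
    ∃ l : List V, 2 ≤ l.length ∧ l.Nodup ∧ ∀ e ∈ l.zip (l.rotate 1), q e.1 e.2 := by
  classical
  have hex : ∃ n, ∃ f : ℕ → V, 1 ≤ n ∧ f 0 = f n ∧ ∀ i < n, q (f i) (f (i + 1)) := by
    obtain ⟨n, f, hn, h1, h2, h3⟩ := walk_of h
    exact ⟨n, f, hn, h1.trans h2.symm, h3⟩
  obtain ⟨f, hn, h0, hs⟩ := Nat.find_spec hex
  have hmin : ∀ m, m < Nat.find hex → ¬ ∃ f : ℕ → V, 1 ≤ m ∧ f 0 = f m ∧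
      ∀ i < m, q (f i) (f (i + 1)) := fun m hm => Nat.find_min hex hm
  generalize Nat.find hex = n at *
  have hne : ∀ i j, i < j → j < n → f i ≠ f j := by
    intro i j hij hj he
    refine hmin (j - i) (by omega) ⟨fun m => f (i + m), by omega, ?_, ?_⟩
    · have : i + (j - i) = j := by omega
      simp only [Nat.add_zero, this, he]
    · intro m hm
      exact hs (i + m) (by omega)
  refine ⟨(List.range n).map f, ?_, ?_, ?_⟩
  · simp only [List.length_map, List.length_range]
    by_contra hc
    have : n = 1 := by omega
    subst this
    have := hs 0 (by omega)
    rw [h0] at this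
    exact hq _ this
  · refine List.Nodup.map_on ?_ List.nodup_range
    intro x hx y hy hxy
    rw [List.mem_range] at hx hy
    rcases lt_trichotomy x y with h | h | h
    · exact absurd hxy (hne x y h hy)
    · exact h
    · exact absurd hxy.symm (hne y x h hx)
  · intro e he
    obtain ⟨i, hi, rfl⟩ := List.mem_iff_getElem.1 he
    have hi' : i < n := by simpa using hi
    simp only [List.getElem_zip, List.getElem_rotate, List.getElem_map, List.getElem_range,
      List.length_map, List.length_range]
    by_cases h : i + 1 < n
    · rw [Nat.mod_eq_of_lt h]
      exact hs i hi'
    · have h1 : i + 1 = n := by omega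
      rw [h1, Nat.mod_self, h0, ← h1]
      exact hs i hi'

lemma cyc_line {V : Type} {G : Digraph V} {Z : Set (V × V)} {l : List V}
    (hl : 0 < l.length) (h : ∀ e ∈ l.zip (l.rotate 1), G.Adj e.1 e.2 ∧ e ∉ Z) :
    Cyc (lineDigraph G).Adj Zᶜ := by
  let e : ℕ → V × V := fun i => (l[i % l.length]'(Nat.mod_lt _ hl),
    l[(i + 1) % l.length]'(Nat.mod_lt _ hl))
  have he : ∀ i, G.Adj (e i).1 (e i).2 ∧ e i ∉ Z := by
    intro i
    apply h
    rw [List.mem_iff_getElem]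
    refine ⟨i % l.length, by simpa using Nat.mod_lt _ hl, ?_⟩
    simp [List.getElem_zip, List.getElem_rotate, e]
  have hstep : ∀ i, RS (lineDigraph G).Adj Zᶜ (e i) (e (i + 1)) := by
    intro i
    exact ⟨⟨(he i).1, (he (i + 1)).1, rfl⟩, (he i).2, (he (i + 1)).2⟩
  have htr : ∀ m, TransGen (RS (lineDigraph G).Adj Zᶜ) (e 0) (e (m + 1)) := by
    intro m
    induction m with
    | zero => exact TransGen.single (hstep 0)
    | succ m ih => exact ih.tail (hstep _)
  refine ⟨e 0, ?_⟩
  have h1 := htr (l.length - 1)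
  have h2 : e (l.length - 1 + 1) = e 0 := by
    have : l.length - 1 + 1 = l.length := by omega
    rw [this]
    simp [e]
  rwa [h2] at h1

lemma cyc_dicycle {V : Type} {G : Digraph V} (hG : ∀ v, ¬ G.Adj v v) {S : Set (V × V)}
    (h : Cyc (lineDigraph G).Adj S) :
    ∃ l : List V, G.IsDicycle l ∧ ∀ e ∈ cycleEdges l, e ∈ S := by
  obtain ⟨e, he⟩ := h
  have h1 : TransGen (fun a b => G.Adj a b ∧ (a, b) ∈ S) e.1 e.1 :=
    TransGen.lift (r := RS (lineDigraph G).Adj S) (p := fun a b => G.Adj a b ∧ (a, b) ∈ S) Prod.fst (by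
      rintro ⟨a, b⟩ ⟨c, d⟩ ⟨⟨h1, h2, h3⟩, h4, h5⟩
      simp only at h1 h2 h3 ⊢
      subst h3
      exact ⟨h1, h4⟩) _ _ he
  obtain ⟨l, h2, h3, h4⟩ := dicycle_of (fun v hv => hG v hv.1) h1
  exact ⟨l, ⟨h2, h3, fun e he => (h4 e he).1⟩, fun e he => (h4 e he).2⟩

end EPx

/-- **Edge-Erdős–Pósa property of directed cycles.** For every `k` there is a `t` such
that every finite loopless digraph `G` either contains `k` pairwise edge-disjoint
directed cycles, or has a set `X` of at most `t` directed edges whose deletion leaves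
no directed cycle. -/
theorem dicycles_edge_erdosPosa (k : ℕ) :
    ∃ t : ℕ, ∀ (V : Type) [Fintype V] [DecidableEq V] (G : Digraph V),
      (∀ v, ¬ G.Adj v v) →
      (∃ C : Fin k → List V, (∀ i, G.IsDicycle (C i)) ∧
        ∀ i j, i ≠ j → ∀ e ∈ cycleEdges (C i), e ∉ cycleEdges (C j)) ∨
      (∃ X : Finset (V × V), X.card ≤ t ∧ (∀ e ∈ X, G.Adj e.1 e.2) ∧
        ∀ l : List V,
          ¬ (Digraph.mk fun a b => G.Adj a b ∧ (a, b) ∉ X).IsDicycle l) := by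
  classical
  obtain ⟨t, ht⟩ := EPx.VEP k
  refine ⟨t, ?_⟩
  intro V _ _ G hG
  rcases ht (V × V) (lineDigraph G).Adj with ⟨S, hS, hC⟩ | ⟨Z, hZ, hZ'⟩
  · left
    have hex := fun i => EPx.cyc_dicycle hG (hC i).2
    choose C hC1 hC2 using hex
    refine ⟨C, hC1, ?_⟩
    intro i j hij e he he'
    exact Set.disjoint_left.1 (hS i j hij) (hC2 i e he) (hC2 j e he')
  · right
    refine ⟨Z.filter (fun e => G.Adj e.1 e.2), (Finset.card_filter_le _ _).trans hZ, ?_, ?_⟩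
    · intro e he
      exact (Finset.mem_filter.1 he).2
    · intro l hl
      obtain ⟨h1, h2, h3⟩ := hl
      refine hZ' (EPx.cyc_line (l := l) (by omega) ?_)
      intro e he
      have h4 := h3 e he
      refine ⟨h4.1, fun hc => h4.2 ?_⟩
      exact Finset.mem_filter.2 ⟨hc, h4.1⟩
end

section
/- Let G be a digraph and let X be a set of vertices of the directed line graph L(G) that meets every directed cycle of L(G). Then X, regarded as a set of directed edges of G, meets every directed cycle of G; that is, the digraph obtained from G by deleting the edges in X contains no directed cycle. -/
/-- If `X` is a set of vertices of the directed line graph `L(G)` (i.e. a set of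
directed edges of `G`) meeting every directed cycle of `L(G)`, then deleting the edges
in `X` from `G` leaves no directed cycle. -/
theorem edge_hitting_of_line_vertex_hitting {V : Type} [Fintype V] (G : Digraph V)
    (hG : ∀ v, ¬ G.Adj v v) (X : Set (V × V)) (hXE : ∀ e ∈ X, G.Adj e.1 e.2)
    (hX : ∀ l : List (V × V), (lineDigraph G).IsDicycle l → ∃ e ∈ l, e ∈ X) :
    ∀ l : List V, ¬ (Digraph.mk fun a b => G.Adj a b ∧ (a, b) ∉ X).IsDicycle l := by
  rintro l ⟨h2, hnd, hadj⟩
  have hlen : (l.zip (l.rotate 1)).length = l.length := by simp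
  have hA : ∀ e ∈ l.zip (l.rotate 1), G.Adj e.1 e.2 := fun e he => (hadj e he).1
  obtain ⟨e, he, heX⟩ := hX (l.zip (l.rotate 1)) (by
    refine ⟨by omega, ?_, ?_⟩
    · apply List.Nodup.of_map Prod.fst
      rw [List.map_fst_zip (by simp)]
      exact hnd
    · intro p hp
      obtain ⟨i, hi, rfl⟩ := List.mem_iff_getElem.1 hp
      have hi' : i < l.length := by
        simp only [List.length_zip, List.length_rotate] at hi
        omega
      have hm : (i + 1) % l.length < l.length := Nat.mod_lt _ (by omega)
      have h1 : (l.zip (l.rotate 1))[i]'(by omega) ∈ l.zip (l.rotate 1) :=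
        List.getElem_mem _
      have h3 : (l.zip (l.rotate 1))[(i + 1) % l.length]'(by omega) ∈ l.zip (l.rotate 1) :=
        List.getElem_mem _
      have h1' := hA _ h1
      have h3' := hA _ h3
      simp only [List.getElem_zip, List.getElem_rotate] at h1' h3'
      simp only [lineDigraph, List.getElem_zip, List.getElem_rotate, hlen]
      exact ⟨h1', h3', trivial⟩)
  exact (hadj e he).2 heX
end
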